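/- arXiv:2503.07615 — 12 statements merged into one kernel-verified Lean document; each statement's English description precedes it below -/
import Mathlib

section
/- Let a, b, c, y, z be rational numbers with abc ≠ 0 and b·y + c ≠ 0 satisfying a·b·y·z² + a·c·y² + 2·a·c·y·z + a·c·z² + b·c·y = 0. Define X = 3abc·(3ac·y + 6ac·z − b²·y + 2bc)/(by + c) and Y = 27a²bc²·(abc·y² + 3abc·y·z − b³·y·z − ac²·y − ac²·z + b²c·y − b²c·z − bc²)/(by + c)². Then Y² = X³ + 27a²b²c²(3ac − b²)·X + 27a³b⁴c³(9ac − 2b²). -/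
/-!
The equation of `C₁` reads `a (b y + c) z² = -c y (a y + 2 a z + b)`. Hence the function
`t = c (a y + 2 a z + b) / (b y + c)` satisfies `t y = -a z²`, and eliminating `y` leaves an
equation in `t` and `z` that is quadratic in `z`. Completing the square with
`s = (a c - b t) z - c t` gives `a s² = b c t (t² - b t + a c)`. This is a Weierstrass equation in
`u = a b c t` and `v = a² b c s`, and removing its `u²` term gives `E₁`, where
`X = 3 a b c (3 t - b)` and `Y = 27 a² b c s`.
-/

section CommRing

variable {R : Type*} [CommRing R] {a b c t y z : R}

theorem param_mul_eq_neg_mul_sq [NoZeroDivisors R] (hbyc : b * y + c ≠ 0)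
    (hC : a * b * y * z ^ 2 + a * c * y ^ 2 + 2 * a * c * y * z + a * c * z ^ 2 + b * c * y = 0)
    (ht : t * (b * y + c) = c * (a * y + 2 * a * z + b)) :
    t * y = -(a * z ^ 2) := by
  apply mul_right_cancel₀ hbyc
  linear_combination y * ht + hC

theorem quadratic_eq_zero_of_param (hty : t * y = -(a * z ^ 2))
    (ht : t * (b * y + c) = c * (a * y + 2 * a * z + b)) :
    a * (a * c - b * t) * z ^ 2 - 2 * a * c * t * z + c * t * (t - b) = 0 := by
  have y_eq : a * c * y = c * t - a * b * z ^ 2 - 2 * a * c * z - b * c := by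
    linear_combination b * hty - ht
  linear_combination a * c * hty - t * y_eq

theorem mul_sq_eq_cubic_of_quadratic_eq_zero
    (h : a * (a * c - b * t) * z ^ 2 - 2 * a * c * t * z + c * t * (t - b) = 0) :
    a * ((a * c - b * t) * z - c * t) ^ 2 = b * c * t * (t ^ 2 - b * t + a * c) := by
  linear_combination (a * c - b * t) * h

theorem weierstrass_of_mul_sq_eq_cubic {s : R}
    (h : a * s ^ 2 = b * c * t * (t ^ 2 - b * t + a * c)) :
    (a ^ 2 * b * c * s) ^ 2 = (a * b * c * t) ^ 3 + -(a * b ^ 2 * c) * (a * b * c * t) ^ 2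
      + a ^ 3 * b ^ 2 * c ^ 3 * (a * b * c * t) := by
  linear_combination a ^ 3 * b ^ 2 * c ^ 2 * h

theorem short_weierstrass_of_weierstrass {p q u v : R} (h : v ^ 2 = u ^ 3 + p * u ^ 2 + q * u) :
    (27 * v) ^ 2 = (9 * u + 3 * p) ^ 3 + 27 * (3 * q - p ^ 2) * (9 * u + 3 * p)
      + 27 * p * (2 * p ^ 2 - 9 * q) := by
  linear_combination 729 * h

end CommRing

section Field

variable {K : Type*} [Field K] {a b c t y z : K}

theorem X_eq_of_param (hbyc : b * y + c ≠ 0)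
    (ht : t * (b * y + c) = c * (a * y + 2 * a * z + b)) :
    3 * a * b * c * (3 * a * c * y + 6 * a * c * z - b ^ 2 * y + 2 * b * c) / (b * y + c)
      = 9 * (a * b * c * t) + 3 * -(a * b ^ 2 * c) := by
  rw [div_eq_iff hbyc]
  linear_combination -9 * a * b * c * ht

theorem Y_eq_of_param (hbyc : b * y + c ≠ 0)
    (hC : a * b * y * z ^ 2 + a * c * y ^ 2 + 2 * a * c * y * z + a * c * z ^ 2 + b * c * y = 0)
    (ht : t * (b * y + c) = c * (a * y + 2 * a * z + b)) :
    27 * a ^ 2 * b * c ^ 2 * (a * b * c * y ^ 2 + 3 * a * b * c * y * z - b ^ 3 * y * z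
        - a * c ^ 2 * y - a * c ^ 2 * z + b ^ 2 * c * y - b ^ 2 * c * z - b * c ^ 2)
        / (b * y + c) ^ 2
      = 27 * (a ^ 2 * b * c * ((a * c - b * t) * z - c * t)) := by
  have s_mul : ((a * c - b * t) * z - c * t) * (b * y + c)
      = -(c * (2 * a * b * z ^ 2 + a * c * z + b ^ 2 * z + a * c * y + b * c)) := by
    linear_combination -(b * z + c) * ht
  rw [div_eq_iff (pow_ne_zero 2 hbyc)]
  linear_combination 27 * a ^ 2 * b * c * (2 * b * c * hC - (b * y + c) * s_mul)

theorem stmt_1_general (hbyc : b * y + c ≠ 0)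
    (hC : a * b * y * z ^ 2 + a * c * y ^ 2 + 2 * a * c * y * z + a * c * z ^ 2 + b * c * y = 0) :
    let X : K := 3 * a * b * c * (3 * a * c * y + 6 * a * c * z - b ^ 2 * y + 2 * b * c)
      / (b * y + c)
    let Y : K := 27 * a ^ 2 * b * c ^ 2 * (a * b * c * y ^ 2 + 3 * a * b * c * y * z
      - b ^ 3 * y * z - a * c ^ 2 * y - a * c ^ 2 * z + b ^ 2 * c * y - b ^ 2 * c * z
      - b * c ^ 2) / (b * y + c) ^ 2
    Y ^ 2 = X ^ 3 + 27 * a ^ 2 * b ^ 2 * c ^ 2 * (3 * a * c - b ^ 2) * X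
      + 27 * a ^ 3 * b ^ 4 * c ^ 3 * (9 * a * c - 2 * b ^ 2) := by
  intro X Y
  obtain ⟨t, ht⟩ : ∃ t, t * (b * y + c) = c * (a * y + 2 * a * z + b) :=
    ⟨_, div_mul_cancel₀ _ hbyc⟩
  have hty : t * y = -(a * z ^ 2) := param_mul_eq_neg_mul_sq hbyc hC ht
  have cubic : a * ((a * c - b * t) * z - c * t) ^ 2 = b * c * t * (t ^ 2 - b * t + a * c) :=
    mul_sq_eq_cubic_of_quadratic_eq_zero (quadratic_eq_zero_of_param hty ht)
  have hX : X = 9 * (a * b * c * t) + 3 * -(a * b ^ 2 * c) := X_eq_of_param hbyc ht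
  have hY : Y = 27 * (a ^ 2 * b * c * ((a * c - b * t) * z - c * t)) := Y_eq_of_param hbyc hC ht
  rw [hX, hY]
  linear_combination short_weierstrass_of_weierstrass (weierstrass_of_mul_sq_eq_cubic cubic)

end Field

theorem stmt_1 (a b c y z : ℚ) (habc : a * b * c ≠ 0) (hbyc : b * y + c ≠ 0)
    (hC : a * b * y * z ^ 2 + a * c * y ^ 2 + 2 * a * c * y * z + a * c * z ^ 2
      + b * c * y = 0) :
    let X : ℚ := 3 * a * b * c * (3 * a * c * y + 6 * a * c * z - b ^ 2 * y + 2 * b * c)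
      / (b * y + c)
    let Y : ℚ := 27 * a ^ 2 * b * c ^ 2 * (a * b * c * y ^ 2 + 3 * a * b * c * y * z
      - b ^ 3 * y * z - a * c ^ 2 * y - a * c ^ 2 * z + b ^ 2 * c * y - b ^ 2 * c * z
      - b * c ^ 2) / (b * y + c) ^ 2
    Y ^ 2 = X ^ 3 + 27 * a ^ 2 * b ^ 2 * c ^ 2 * (3 * a * c - b ^ 2) * X
      + 27 * a ^ 3 * b ^ 4 * c ^ 3 * (9 * a * c - 2 * b ^ 2) :=
  stmt_1_general hbyc hC
end

section
/- Let a, b, c, X, Y be rational numbers with abc ≠ 0 and X ≠ 9a²c² − 3ab²c satisfying Y² = X³ + 27a²b²c²(3ac − b²)·X + 27a³b⁴c³(9ac − 2b²). Define y = −c·(108a³b²c³ − 18a²b⁴c² + 9X·a²c² − 3X·ab²c + 6Y·ac + X²)/(b·(X − 9a²c² + 3ab²c)²) and z = −(9a²b²c² + 3X·ac + Y)/(3ab·(X − 9a²c² + 3ab²c)). Then a·b·y·z² + a·c·y² + 2·a·c·y·z + a·c·z² + b·c·y = 0. -/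
/-! The point `T = (9a²c² - 3ab²c, -27a³c³)` lies on `E₁`. For a point `P = (X, Y)` of `E₁` with
`X ≠ x(T)`, the line through `T` and `P` has slope `-3a(bz + c)`, and its third intersection point
with `E₁` has abscissa `-9a²bcy - 3ab²c`: up to affine changes of coordinates, `z` is the slope of a
line through `T`, and `y` is `x(P + T)`. Cutting `E₁` with a line through `T` and removing the
factor of the resulting cubic that belongs to `T` leaves a quadratic, which relates the slope of the
line to the abscissas of the two remaining points; in the coordinates `y` and `z` it is `C₁`. -/

open Polynomial

section Chord

variable {R F : Type*} [CommRing R] [Field F]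

/-- The polynomial whose roots are the abscissas of the two further points in which the line of
slope `ℓ` through a point `(x₁, y₁)` of `W` meets `W`. It has the sign of `W.addPolynomial`, so its
leading coefficient is `-1`. -/
noncomputable def residualQuadratic (W : WeierstrassCurve.Affine R) (x₁ y₁ ℓ : R) : R[X] :=
  C ℓ * (C (2 * y₁) + C ℓ * (X - C x₁)) + C W.a₁ * (C y₁ + C ℓ * X) + C (W.a₃ * ℓ)
    - (X ^ 2 + C x₁ * X + C (x₁ ^ 2) + C W.a₂ * (X + C x₁) + C W.a₄)

theorem addPolynomial_eq_mul_residualQuadratic {W : WeierstrassCurve.Affine R} {x₁ y₁ : R}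
    (h₁ : W.Equation x₁ y₁) (ℓ : R) :
    W.addPolynomial x₁ y₁ ℓ = (X - C x₁) * residualQuadratic W x₁ y₁ ℓ := by
  have hC := congrArg (C : R → R[X]) ((W.equation_iff x₁ y₁).mp h₁)
  rw [W.addPolynomial_eq, residualQuadratic, Cubic.toPoly]
  simp only [map_add, map_sub, map_mul, map_neg, map_pow, map_one, map_ofNat] at hC ⊢
  linear_combination hC

theorem isRoot_residualQuadratic_addX [DecidableEq F] {W : WeierstrassCurve.Affine F}
    {x₁ x₂ y₁ y₂ : F} (h₁ : W.Equation x₁ y₁) (h₂ : W.Equation x₂ y₂)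
    (hxy : ¬(x₁ = x₂ ∧ y₁ = W.negY x₂ y₂)) :
    (residualQuadratic W x₁ y₁ (W.slope x₁ x₂ y₁ y₂)).IsRoot
      (W.addX x₁ x₂ (W.slope x₁ x₂ y₁ y₂)) := by
  have hfactor : residualQuadratic W x₁ y₁ (W.slope x₁ x₂ y₁ y₂)
      = -((X - C x₂) * (X - C (W.addX x₁ x₂ (W.slope x₁ x₂ y₁ y₂)))) := by
    refine mul_left_cancel₀ (X_sub_C_ne_zero x₁) ?_
    rw [← addPolynomial_eq_mul_residualQuadratic h₁,
      WeierstrassCurve.Affine.addPolynomial_slope h₁ h₂ hxy]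
    ring
  simp [hfactor]

end Chord

section Curves

variable {R : Type*} [CommRing R]

/-- The left-hand side of the equation of the affine curve `C₁`. -/
def curveC (a b c y z : R) : R :=
  a * b * y * z ^ 2 + a * c * y ^ 2 + 2 * a * c * y * z + a * c * z ^ 2 + b * c * y

/-- The Weierstrass curve `E₁`. -/
def curveE (a b c : R) : WeierstrassCurve.Affine R where
  a₁ := 0
  a₂ := 0
  a₃ := 0
  a₄ := 27 * a ^ 2 * b ^ 2 * c ^ 2 * (3 * a * c - b ^ 2)
  a₆ := 27 * a ^ 3 * b ^ 4 * c ^ 3 * (9 * a * c - 2 * b ^ 2)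

/-- The abscissa of the base point `T` of `E₁`. -/
def baseX (a b c : R) : R := 9 * a ^ 2 * c ^ 2 - 3 * a * b ^ 2 * c

/-- The ordinate of the base point `T` of `E₁`. -/
def baseY (a c : R) : R := -27 * a ^ 3 * c ^ 3

theorem curveE_equation_iff {a b c X Y : R} :
    (curveE a b c).Equation X Y ↔
      Y ^ 2 = X ^ 3 + 27 * a ^ 2 * b ^ 2 * c ^ 2 * (3 * a * c - b ^ 2) * X
        + 27 * a ^ 3 * b ^ 4 * c ^ 3 * (9 * a * c - 2 * b ^ 2) := by
  simp [WeierstrassCurve.Affine.equation_iff, curveE]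

theorem curveE_equation_base (a b c : R) : (curveE a b c).Equation (baseX a b c) (baseY a c) := by
  rw [curveE_equation_iff, baseX, baseY]
  ring

theorem eval_residualQuadratic_curveE (a b c y z : R) :
    (residualQuadratic (curveE a b c) (baseX a b c) (baseY a c) (-3 * a * (b * z + c))).eval
        (-9 * a ^ 2 * b * c * y - 3 * a * b ^ 2 * c)
      = -(3 ^ 4 * a ^ 3 * b ^ 2 * c) * curveC a b c y z := by
  simp only [residualQuadratic, curveE, baseX, baseY, curveC, eval_add, eval_sub, eval_mul,
    eval_pow, eval_C, eval_X]
  ring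

theorem sub_baseX (a b c X : R) :
    X - baseX a b c = X - 9 * a ^ 2 * c ^ 2 + 3 * a * b ^ 2 * c := by
  rw [baseX]
  ring

end Curves

section Parametrization

variable {K : Type*} [Field K] {a b c X Y : K}

/-- The `y`-coordinate of the point of `C₁` attached to the point `(X, Y)` of `E₁`; a junk value
unless `b` and `X - x(T)` are nonzero. -/
def coordY (a b c X Y : K) : K :=
  -(c * (108 * a ^ 3 * b ^ 2 * c ^ 3 - 18 * a ^ 2 * b ^ 4 * c ^ 2
    + 9 * X * a ^ 2 * c ^ 2 - 3 * X * a * b ^ 2 * c + 6 * Y * a * c + X ^ 2))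
    / (b * (X - 9 * a ^ 2 * c ^ 2 + 3 * a * b ^ 2 * c) ^ 2)

/-- The `z`-coordinate of the point of `C₁` attached to the point `(X, Y)` of `E₁`; a junk value
unless `3`, `a`, `b` and `X - x(T)` are nonzero. -/
def coordZ (a b c X Y : K) : K :=
  -(9 * a ^ 2 * b ^ 2 * c ^ 2 + 3 * X * a * c + Y)
    / (3 * a * b * (X - 9 * a ^ 2 * c ^ 2 + 3 * a * b ^ 2 * c))

theorem slope_base_eq_div [DecidableEq K] (hX : X ≠ baseX a b c) :
    (curveE a b c).slope (baseX a b c) X (baseY a c) Y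
      = (Y - baseY a c) / (X - baseX a b c) := by
  rw [WeierstrassCurve.Affine.slope_of_X_ne hX.symm, ← neg_div_neg_eq, neg_sub, neg_sub]

theorem slope_base_eq_coordZ [DecidableEq K] (h3 : (3 : K) ≠ 0) (ha : a ≠ 0)
    (hb : b ≠ 0) (hX : X ≠ baseX a b c) :
    (curveE a b c).slope (baseX a b c) X (baseY a c) Y
      = -3 * a * (b * coordZ a b c X Y + c) := by
  have hD : X - baseX a b c ≠ 0 := sub_ne_zero.mpr hX
  rw [slope_base_eq_div hX, coordZ, ← sub_baseX]
  field_simp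
  rw [baseX, baseY]
  ring

theorem addX_base_eq_coordY [DecidableEq K] (hb : b ≠ 0) (hX : X ≠ baseX a b c)
    (hE : (curveE a b c).Equation X Y) :
    (curveE a b c).addX (baseX a b c) X ((curveE a b c).slope (baseX a b c) X (baseY a c) Y)
      = -9 * a ^ 2 * b * c * coordY a b c X Y - 3 * a * b ^ 2 * c := by
  have hD : X - baseX a b c ≠ 0 := sub_ne_zero.mpr hX
  rw [slope_base_eq_div hX, coordY, ← sub_baseX]
  simp only [WeierstrassCurve.Affine.addX, curveE, zero_mul, add_zero, sub_zero]
  field_simp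
  rw [baseX, baseY]
  linear_combination curveE_equation_iff.mp hE

theorem stmt_2_general (h3 : (3 : K) ≠ 0) (habc : a * b * c ≠ 0)
    (hX : X ≠ baseX a b c) (hE : (curveE a b c).Equation X Y) :
    curveC a b c (coordY a b c X Y) (coordZ a b c X Y) = 0 := by
  classical
  obtain ⟨⟨ha, hb⟩, hc⟩ : (a ≠ 0 ∧ b ≠ 0) ∧ c ≠ 0 := by simpa only [mul_ne_zero_iff] using habc
  have hscale : -(3 ^ 4 * a ^ 3 * b ^ 2 * c) ≠ 0 := by simp [h3, ha, hb, hc]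
  have hroot := isRoot_residualQuadratic_addX (curveE_equation_base a b c) hE
    fun h => hX h.1.symm
  rw [addX_base_eq_coordY hb hX hE, slope_base_eq_coordZ h3 ha hb hX, IsRoot.def,
    eval_residualQuadratic_curveE] at hroot
  exact (mul_eq_zero.mp hroot).resolve_left hscale

end Parametrization

theorem stmt_2 (a b c X Y : ℚ) (habc : a * b * c ≠ 0)
    (hX : X ≠ 9 * a ^ 2 * c ^ 2 - 3 * a * b ^ 2 * c)
    (hE : Y ^ 2 = X ^ 3 + 27 * a ^ 2 * b ^ 2 * c ^ 2 * (3 * a * c - b ^ 2) * X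
      + 27 * a ^ 3 * b ^ 4 * c ^ 3 * (9 * a * c - 2 * b ^ 2)) :
    let y : ℚ := -(c * (108 * a ^ 3 * b ^ 2 * c ^ 3 - 18 * a ^ 2 * b ^ 4 * c ^ 2
      + 9 * X * a ^ 2 * c ^ 2 - 3 * X * a * b ^ 2 * c + 6 * Y * a * c + X ^ 2))
      / (b * (X - 9 * a ^ 2 * c ^ 2 + 3 * a * b ^ 2 * c) ^ 2)
    let z : ℚ := -(9 * a ^ 2 * b ^ 2 * c ^ 2 + 3 * X * a * c + Y)
      / (3 * a * b * (X - 9 * a ^ 2 * c ^ 2 + 3 * a * b ^ 2 * c))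
    a * b * y * z ^ 2 + a * c * y ^ 2 + 2 * a * c * y * z + a * c * z ^ 2
      + b * c * y = 0 :=
  stmt_2_general three_ne_zero habc hX (curveE_equation_iff.mpr hE)
end

section
/- The set of rational solutions (V, U) of the equation U² = V³ − 108·V + 297 is exactly {(3, 0), (−6, 27), (−6, −27), (12, 27), (12, −27)}. -/
/-!
The substitution `V = 9x + 3`, `U = 27y` turns the curve into `y² = x(x² + kx - 1)` with `k = 1`,
and the argument works whenever `k² + 4` is prime. If `x ≠ 0`, then, up to the translation
`x ↦ -1/x` by the point `(0, 0)`, a rational point has `x = r²/s²` with `z² = r⁴ + kr²s² - s⁴`.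

Such a point is twice another one of the same shape. Indeed `(2r² + ks²)² - 4z² = (k² + 4)s⁴`, and
the two factors on the left are, up to a power of two, coprime, so they are `u⁴` and
`(k² + 4)v⁴`; as `s = ±uv` or `s = ±2uv`, adding them gives `w² = (u² - kv²)² + 4v⁴` with
`w = 2r` or `w = r`. Now
`w² - (u² - kv²)² = 4v⁴` factors in the same way into fourth powers `a⁴` and `b⁴`, and
`u² = b⁴ + kb²a² - a⁴` is the original equation in `(b, a)`. The two steps are a 2-isogeny and
its dual, and `s = ±abu` or `s = ±2abu`, so `|s|` decreases until `b² = u² = 1`. Then `k = a²`,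
and `k² + 4 = a⁴ + 4` is prime only for `a² = 1` by Sophie Germain's identity. Going back up from
`a² = b² = 1` gives only `r² = s² = 1`.
-/

section OrderedRing

variable {R : Type*} [Ring R] [LinearOrder R] [IsStrictOrderedRing R] {a b : R}

lemma nonneg_and_nonneg_of_add_nonneg_of_mul_nonneg (hadd : 0 ≤ a + b) (hmul : 0 ≤ a * b) :
    0 ≤ a ∧ 0 ≤ b := by
  rcases mul_nonneg_iff.mp hmul with h | ⟨ha, hb⟩
  · exact h
  · exact ⟨hadd.trans (add_le_of_nonpos_right hb), hadd.trans (add_le_of_nonpos_left ha)⟩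

lemma sq_eq_sq_of_pow_eq_pow {n : ℕ} (hn : n ≠ 0) (h : a ^ n = b ^ n) : a ^ 2 = b ^ 2 := by
  rcases (pow_eq_pow_iff_of_ne_zero hn).mp h with rfl | ⟨rfl, -⟩
  · rfl
  · exact neg_sq b

end OrderedRing

section Factorization

lemma isCoprime_of_mul_eq_squarefree_mul_pow {R : Type*} [CommRing R] [IsDomain R]
    [IsPrincipalIdealRing R] {d a b c : R} {n : ℕ} (hd : Squarefree d) (hc : IsCoprime c (a + b))
    (h : a * b = d * c ^ n) : IsCoprime a b := by
  refine isCoprime_of_prime_dvd ?_ fun q hq hqa hqb ↦ ?_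
  · rintro ⟨rfl, rfl⟩
    have hcu : IsUnit c := isCoprime_zero_right.mp (by simpa only [add_zero] using hc)
    exact (mul_ne_zero hd.ne_zero (hcu.pow n).ne_zero) (by simpa using h.symm)
  · have hqc : ¬q ∣ c := fun hqc ↦ hq.not_isUnit (hc.isUnit_of_dvd' hqc (dvd_add hqa hqb))
    have hcop : IsCoprime q (c ^ n) := (hq.coprime_iff_not_dvd.mpr hqc).pow_right
    have hdvd : q * q ∣ d * c ^ n := h ▸ mul_dvd_mul hqa hqb
    exact hq.not_isUnit (hd q ((hcop.mul_left hcop).dvd_of_dvd_mul_right hdvd))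

variable {a b c : ℤ} {n : ℕ}

lemma exists_eq_even_pow_of_mul_eq_pow (hn : Even n) (hab : IsCoprime a b) (ha : 0 ≤ a)
    (h : a * b = c ^ n) : ∃ u, a = u ^ n := by
  obtain ⟨u, hu⟩ := exists_associated_pow_of_mul_eq_pow' hab h
  refine ⟨u, ?_⟩
  have hun : 0 ≤ u ^ n := hn.pow_nonneg u
  rcases Int.associated_iff.mp hu with h | h <;> linarith

lemma exists_eq_even_pow_of_mul_eq_prime_mul_pow {p : ℤ} (hp : Prime p) (hp0 : 0 < p)
    (hn : Even n) (hab : IsCoprime a b) (ha : 0 ≤ a) (hb : 0 ≤ b) (h : a * b = p * c ^ n) :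
    ∃ u v, (a = u ^ n ∧ b = p * v ^ n) ∨ (b = u ^ n ∧ a = p * v ^ n) := by
  wlog hpb : p ∣ b generalizing a b
  · have hpa : p ∣ a := (hp.dvd_or_dvd ⟨_, h⟩).resolve_right hpb
    obtain ⟨u, v, huv⟩ := this hab.symm hb ha (by rw [mul_comm, h]) hpa
    exact ⟨u, v, huv.symm⟩
  obtain ⟨b', rfl⟩ := hpb
  have hab' : IsCoprime a b' := hab.of_mul_right_right
  have h' : a * b' = c ^ n := mul_left_cancel₀ hp.ne_zero (by rw [← h]; ring)
  obtain ⟨u, hu⟩ := exists_eq_even_pow_of_mul_eq_pow hn hab' ha h'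
  obtain ⟨v, hv⟩ := exists_eq_even_pow_of_mul_eq_pow hn hab'.symm
    (nonneg_of_mul_nonneg_right hb hp0) (by rw [mul_comm, h'])
  exact ⟨u, v, .inl ⟨hu, by rw [hv]⟩⟩

lemma exists_add_eq_of_mul_eq_prime_mul_even_pow {p : ℤ} (hp : Prime p) (hp0 : 0 < p)
    (hn : Even n) (hn0 : n ≠ 0) (hc : IsCoprime c (a + b)) (hadd : 0 ≤ a + b)
    (h : a * b = p * c ^ n) :
    ∃ u v, IsCoprime u v ∧ a + b = u ^ n + p * v ^ n ∧ c ^ 2 = (u * v) ^ 2 := by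
  have hmul : 0 ≤ a * b := h ▸ mul_nonneg hp0.le (hn.pow_nonneg c)
  obtain ⟨ha, hb⟩ := nonneg_and_nonneg_of_add_nonneg_of_mul_nonneg hadd hmul
  have hab : IsCoprime a b :=
    isCoprime_of_mul_eq_squarefree_mul_pow hp.irreducible.squarefree hc h
  have coprime_and_sq_eq {u v : ℤ} (huv : IsCoprime (u ^ n) (p * v ^ n))
      (h : u ^ n * (p * v ^ n) = p * c ^ n) : IsCoprime u v ∧ c ^ 2 = (u * v) ^ 2 := by
    refine ⟨(IsCoprime.pow_iff hn0.bot_lt hn0.bot_lt).mp huv.of_mul_right_right,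
      sq_eq_sq_of_pow_eq_pow hn0 (mul_left_cancel₀ hp.ne_zero ?_)⟩
    rw [← h, mul_pow]; ring
  obtain ⟨u, v, ⟨rfl, rfl⟩ | ⟨rfl, rfl⟩⟩ :=
    exists_eq_even_pow_of_mul_eq_prime_mul_pow hp hp0 hn hab ha hb h
  · obtain ⟨huv, hcuv⟩ := coprime_and_sq_eq hab h
    exact ⟨u, v, huv, rfl, hcuv⟩
  · obtain ⟨huv, hcuv⟩ := coprime_and_sq_eq hab.symm (by rw [mul_comm, h])
    exact ⟨u, v, huv, add_comm _ _, hcuv⟩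

end Factorization

lemma sq_eq_one_of_prime_pow_four_add_four {a : ℤ} (h : Prime (a ^ 4 + 4)) : a ^ 2 = 1 := by
  have hfac : a ^ 4 + 4 = ((a - 1) ^ 2 + 1) * ((a + 1) ^ 2 + 1) := by ring
  have hzero {m : ℤ} (hm : IsUnit (m ^ 2 + 1)) : m = 0 := by
    rcases Int.isUnit_iff.mp hm with hm | hm <;> nlinarith [sq_nonneg m]
  rcases h.irreducible.isUnit_or_isUnit hfac with hu | hu
  · rw [sub_eq_zero.mp (hzero hu), one_pow]
  · rw [eq_neg_of_add_eq_zero_left (hzero hu), neg_one_sq]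

lemma natAbs_lt_natAbs_of_sq_eq_mul_sq {a d s : ℤ} (hs : s ≠ 0) (h : s ^ 2 = (a * d) ^ 2)
    (hd : ¬IsUnit d) : a.natAbs < s.natAbs := by
  have hsad : s.natAbs = a.natAbs * d.natAbs := by
    rw [← Int.natAbs_mul, Int.natAbs_eq_iff_sq_eq, h]
  have had : a.natAbs * d.natAbs ≠ 0 := hsad ▸ Int.natAbs_ne_zero.mpr hs
  have hd1 : d.natAbs ≠ 1 := fun h1 ↦ hd (Int.isUnit_iff_natAbs_eq.mpr h1)
  obtain ⟨ha0, hd0⟩ := mul_ne_zero_iff.mp had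
  rw [hsad]
  exact lt_mul_of_one_lt_right (by omega) (by omega)

/-- The integers `r`, `s`, `z` form a primitive point of the quartic `z² = r⁴ + kr²s² - s⁴`. This is
the covering of `y² = x(x² + kx - 1)` given by `x = r²/s²`, `y = rz/s³`. -/
structure IsQuarticPoint (k r s z : ℤ) : Prop where
  isCoprime : IsCoprime r s
  sq_eq : z ^ 2 = r ^ 4 + k * r ^ 2 * s ^ 2 - s ^ 4

/-- The integers `u`, `v`, `w` form a primitive point of the quartic
`w² = u⁴ - 2ku²v² + (k² + 4)v⁴`, the analogue of `IsQuarticPoint` for the 2-isogenous curve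
`y² = x(x² - 2kx + k² + 4)`. The right-hand side is written as a sum of two squares. -/
structure IsDualQuarticPoint (k u v w : ℤ) : Prop where
  isCoprime : IsCoprime u v
  sq_eq : w ^ 2 = (u ^ 2 - k * v ^ 2) ^ 2 + (2 * v ^ 2) ^ 2

namespace IsDualQuarticPoint

variable {k u v w : ℤ}

lemma of_sq_eq (huv : IsCoprime u v)
    (h : w ^ 2 + 2 * k * (u * v) ^ 2 = u ^ 4 + (k ^ 2 + 4) * v ^ 4) :
    IsDualQuarticPoint k u v w :=
  ⟨huv, by linear_combination h⟩

lemma isCoprime_right (h : IsDualQuarticPoint k u v w) : IsCoprime v w := by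
  have hmod : w ^ 2 = u ^ 4 + v * (-2 * k * u ^ 2 * v + (k ^ 2 + 4) * v ^ 3) := by
    linear_combination h.sq_eq
  refine (IsCoprime.pow_right_iff two_pos).mp ?_
  rw [hmod]
  exact h.isCoprime.symm.pow_right.add_mul_left_right _

lemma exists_isQuarticPoint (h : IsDualQuarticPoint k u v w) :
    ∃ a b, IsQuarticPoint k b a u ∧ v ^ 2 = (a * b) ^ 2 ∧ w ^ 2 = (a ^ 4 + b ^ 4) ^ 2 := by
  wlog hw : 0 ≤ w generalizing w
  · simpa using this (w := -w) ⟨h.isCoprime, by rw [neg_sq, h.sq_eq]⟩ (by linarith)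
  obtain ⟨t, ht⟩ : Even (w - (u ^ 2 - k * v ^ 2)) := by
    have hsq : Even (w ^ 2 - (u ^ 2 - k * v ^ 2) ^ 2) :=
      ⟨2 * v ^ 4, by linear_combination h.sq_eq⟩
    rwa [Int.even_sub, Int.even_pow' two_ne_zero, Int.even_pow' two_ne_zero, ← Int.even_sub] at hsq
  obtain ⟨t', ht'⟩ : ∃ t', t' = t + (u ^ 2 - k * v ^ 2) := ⟨_, rfl⟩
  have hadd : t + t' = w := by linear_combination ht' - ht
  have hmul : t * t' = 1 * v ^ 4 := by
    refine mul_left_cancel₀ four_ne_zero ?_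
    linear_combination 4 * t * ht' + h.sq_eq - (w + (u ^ 2 - k * v ^ 2) + 2 * t) * ht
  have hcop : IsCoprime t t' :=
    isCoprime_of_mul_eq_squarefree_mul_pow squarefree_one (hadd ▸ h.isCoprime_right) hmul
  rw [one_mul] at hmul
  obtain ⟨ht0, ht0'⟩ :=
    nonneg_and_nonneg_of_add_nonneg_of_mul_nonneg (hadd ▸ hw) (hmul ▸ by positivity)
  obtain ⟨a, rfl⟩ := exists_eq_even_pow_of_mul_eq_pow (n := 4) (by decide) hcop ht0 hmul
  obtain ⟨b, rfl⟩ :=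
    exists_eq_even_pow_of_mul_eq_pow (n := 4) (by decide) hcop.symm ht0' (by rw [mul_comm, hmul])
  have hv : v ^ 2 = (a * b) ^ 2 := sq_eq_sq_of_pow_eq_pow four_ne_zero (by rw [← hmul, mul_pow])
  refine ⟨a, b, ⟨((IsCoprime.pow_iff four_pos four_pos).mp hcop).symm, ?_⟩, hv, by rw [hadd]⟩
  linear_combination -ht' + k * hv

end IsDualQuarticPoint

namespace IsQuarticPoint

variable {k r s z : ℤ}

lemma left_ne_zero (h : IsQuarticPoint k r s z) : r ≠ 0 := by
  rintro rfl
  have hs : IsUnit s := isCoprime_zero_left.mp h.isCoprime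
  have hz : z ^ 2 = -(s ^ 2) ^ 2 := by linear_combination h.sq_eq
  rw [Int.isUnit_sq hs] at hz
  linarith [sq_nonneg z]

lemma sq_eq_of_sq_eq_one (h : IsQuarticPoint k r s z) (hr : r ^ 2 = 1) (hs : s ^ 2 = 1) :
    z ^ 2 = k := by
  calc z ^ 2 = (r ^ 2) ^ 2 + k * r ^ 2 * s ^ 2 - (s ^ 2) ^ 2 := by rw [h.sq_eq]; ring
    _ = k := by rw [hr, hs]; ring

lemma two_mul_sq_add_nonneg (h : IsQuarticPoint k r s z) : 0 ≤ 2 * r ^ 2 + k * s ^ 2 := by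
  have hr : 0 < r ^ 2 := by have := h.left_ne_zero; positivity
  have hmul : 0 ≤ r ^ 2 * (r ^ 2 + k * s ^ 2) := by
    rw [show r ^ 2 * (r ^ 2 + k * s ^ 2) = z ^ 2 + s ^ 4 by linear_combination -h.sq_eq]
    positivity
  linarith [nonneg_of_mul_nonneg_right hmul hr]

lemma exists_isDualQuarticPoint_of_odd (hk : Prime (k ^ 2 + 4)) (h : IsQuarticPoint k r s z)
    (hs : Odd s) : ∃ u v, IsDualQuarticPoint k u v (2 * r) ∧ s ^ 2 = (u * v) ^ 2 := by
  have hadd : 2 * r ^ 2 + k * s ^ 2 - 2 * z + (2 * r ^ 2 + k * s ^ 2 + 2 * z) =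
      2 ^ 2 * r ^ 2 + s * (2 * k * s) := by ring
  have hs2 : IsCoprime s 2 := Int.isCoprime_two_right.mpr hs
  have hcop : IsCoprime s (2 ^ 2 * r ^ 2 + s * (2 * k * s)) :=
    (hs2.pow_right.mul_right h.isCoprime.symm.pow_right).add_mul_left_right _
  obtain ⟨u, v, huv, hsum, hsuv⟩ := exists_add_eq_of_mul_eq_prime_mul_even_pow
    (n := 4) hk (by positivity) (by decide) four_ne_zero (hadd ▸ hcop)
    (by linarith [h.two_mul_sq_add_nonneg])
    (by linear_combination -4 * h.sq_eq)
  exact ⟨u, v, .of_sq_eq huv (by linear_combination hsum - 2 * k * hsuv), hsuv⟩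

lemma exists_isDualQuarticPoint_of_even (hk : Prime (k ^ 2 + 4)) (h : IsQuarticPoint k r s z)
    (hs : Even s) : ∃ u v, IsDualQuarticPoint k u v r ∧ s ^ 2 = (2 * (u * v)) ^ 2 := by
  obtain ⟨f, rfl⟩ := hs.two_dvd
  have hr : Odd r := Int.isCoprime_two_right.mp h.isCoprime.of_mul_right_left
  have hz : Odd z := by
    have hsq : z ^ 2 = r ^ 4 + 2 * (2 * k * r ^ 2 * f ^ 2 - 8 * f ^ 4) := by
      linear_combination h.sq_eq
    exact (Int.odd_pow' two_ne_zero).mp (hsq ▸ hr.pow.add_even (even_two_mul _))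
  obtain ⟨t, ht⟩ : 2 ∣ r ^ 2 - z := (hr.pow.sub_odd hz).two_dvd
  have hadd : t + k * f ^ 2 + (t + k * f ^ 2 + z) = r ^ 2 + f * (2 * k * f) := by
    linear_combination -ht
  have hcop : IsCoprime f (r ^ 2 + f * (2 * k * f)) :=
    h.isCoprime.of_mul_right_right.symm.pow_right.add_mul_left_right _
  have hmul : (t + k * f ^ 2) * (t + k * f ^ 2 + z) = (k ^ 2 + 4) * f ^ 4 := by
    refine mul_left_cancel₀ four_ne_zero ?_
    linear_combination -h.sq_eq - (r ^ 2 + z + 2 * t + 4 * k * f ^ 2) * ht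
  have hnonneg : 0 ≤ t + k * f ^ 2 + (t + k * f ^ 2 + z) := by
    linarith [h.two_mul_sq_add_nonneg]
  obtain ⟨u, v, huv, hsum, hfuv⟩ := exists_add_eq_of_mul_eq_prime_mul_even_pow
    (n := 4) hk (by positivity) (by decide) four_ne_zero (hadd ▸ hcop) hnonneg hmul
  exact ⟨u, v, .of_sq_eq huv (by linear_combination hsum - 2 * k * hfuv - hadd),
    by linear_combination 4 * hfuv⟩

/-- On `x = r²/s²` this is the duplication formula `x(2P) = (x² + 1)²/(2y)²`, whose numerator and
denominator may have a common factor `4`. -/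
lemma exists_half (hk : Prime (k ^ 2 + 4)) (h : IsQuarticPoint k r s z) :
    ∃ a b c, IsQuarticPoint k b a c ∧
      ((2 * r) ^ 2 = (a ^ 4 + b ^ 4) ^ 2 ∧ s ^ 2 = (a * b * c) ^ 2 ∨
        r ^ 2 = (a ^ 4 + b ^ 4) ^ 2 ∧ s ^ 2 = (2 * (a * b * c)) ^ 2) := by
  rcases Int.even_or_odd s with hs | hs
  · obtain ⟨u, v, huv, hsuv⟩ := h.exists_isDualQuarticPoint_of_even hk hs
    obtain ⟨a, b, hba, hv, hr⟩ := huv.exists_isQuarticPoint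
    exact ⟨a, b, u, hba, .inr ⟨hr, by linear_combination hsuv + 4 * u ^ 2 * hv⟩⟩
  · obtain ⟨u, v, huv, hsuv⟩ := h.exists_isDualQuarticPoint_of_odd hk hs
    obtain ⟨a, b, hba, hv, hr⟩ := huv.exists_isQuarticPoint
    exact ⟨a, b, u, hba, .inl ⟨hr, by linear_combination hsuv + u ^ 2 * hv⟩⟩

lemma eq_one_and_sq_eq_one_of_sq_eq_one (hk : Prime (k ^ 2 + 4)) (h : IsQuarticPoint k r s z)
    (hs : s ≠ 0) (hr : r ^ 2 = 1) (hz : z ^ 2 = 1) : k = 1 ∧ s ^ 2 = 1 := by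
  have hks : k = s ^ 2 := by
    refine mul_right_cancel₀ (pow_ne_zero 2 hs) ?_
    linear_combination hz - h.sq_eq - (r ^ 2 + 1 + k * s ^ 2) * hr
  have hs1 : s ^ 2 = 1 :=
    sq_eq_one_of_prime_pow_four_add_four (by convert hk using 2; rw [hks]; ring)
  exact ⟨hks.trans hs1, hs1⟩

theorem eq_one_and_sq_eq_one (hk : Prime (k ^ 2 + 4)) (h : IsQuarticPoint k r s z) (hs : s ≠ 0) :
    k = 1 ∧ r ^ 2 = 1 ∧ s ^ 2 = 1 := by
  induction hm : s.natAbs using Nat.strong_induction_on generalizing r s z with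
  | _ m ih =>
  subst hm
  obtain ⟨a, b, c, hba, hcase⟩ := h.exists_half hk
  have ha : a ≠ 0 := by
    rintro rfl
    rcases hcase with ⟨-, h0⟩ | ⟨-, h0⟩ <;> simp [hs] at h0
  obtain ⟨hr, hsabc⟩ | ⟨hr, hsabc⟩ := hcase
  · obtain ⟨hk1, hb1, ha1⟩ : k = 1 ∧ b ^ 2 = 1 ∧ a ^ 2 = 1 := by
      rw [mul_assoc] at hsabc
      by_cases hbc : IsUnit (b * c)
      · have hb1 : b ^ 2 = 1 := Int.isUnit_sq (isUnit_of_mul_isUnit_left hbc)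
        have hc1 : c ^ 2 = 1 := Int.isUnit_sq (isUnit_of_mul_isUnit_right hbc)
        obtain ⟨hk1, ha1⟩ := hba.eq_one_and_sq_eq_one_of_sq_eq_one hk ha hb1 hc1
        exact ⟨hk1, hb1, ha1⟩
      · exact ih _ (natAbs_lt_natAbs_of_sq_eq_mul_sq hs hsabc hbc) hba ha rfl
    have hc1 : c ^ 2 = 1 := (hba.sq_eq_of_sq_eq_one hb1 ha1).trans hk1
    refine ⟨hk1, mul_left_cancel₀ four_ne_zero ?_, ?_⟩
    · calc 4 * r ^ 2 = ((a ^ 2) ^ 2 + (b ^ 2) ^ 2) ^ 2 := by linear_combination hr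
        _ = 4 * 1 := by rw [ha1, hb1]; norm_num
    · rw [hsabc, mul_pow, mul_pow, ha1, hb1, hc1, one_mul, one_mul]
  · have hlt : a.natAbs < s.natAbs := by
      refine natAbs_lt_natAbs_of_sq_eq_mul_sq hs (d := 2 * (b * c)) (by rw [hsabc]; ring) ?_
      exact fun hu ↦ Int.prime_two.not_isUnit (isUnit_of_mul_isUnit_left hu)
    obtain ⟨-, hb1, ha1⟩ := ih _ hlt hba ha rfl
    have hr2 : r ^ 2 = 2 * 2 := by
      rw [hr, show a ^ 4 + b ^ 4 = (a ^ 2) ^ 2 + (b ^ 2) ^ 2 by ring, ha1, hb1]; norm_num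
    have hdvdr : 2 ∣ r := Int.prime_two.dvd_of_dvd_pow ⟨_, hr2⟩
    have hdvds : 2 ∣ s := Int.prime_two.dvd_of_dvd_pow
      (hsabc ▸ (dvd_mul_right 2 _).trans (dvd_pow_self _ two_ne_zero))
    exact absurd (h.isCoprime.isUnit_of_dvd' hdvdr hdvds) Int.prime_two.not_isUnit

end IsQuarticPoint

section RationalPoints

variable {k : ℤ}

lemma exists_isQuarticPoint_of_sq_eq {m n y : ℤ} (hm : m ≠ 0) (hn : 0 < n) (hmn : IsCoprime m n)
    (h : y ^ 2 = m * n * (m ^ 2 + k * m * n - n ^ 2)) :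
    ∃ r s z, IsQuarticPoint k r s z ∧ s ≠ 0 ∧
      (m = r ^ 2 ∧ n = s ^ 2 ∨ m = -s ^ 2 ∧ n = r ^ 2) := by
  have hmq : IsCoprime m (m ^ 2 + k * m * n - n ^ 2) := by
    rw [show m ^ 2 + k * m * n - n ^ 2 = -n ^ 2 + m * (m + k * n) by ring]
    exact hmn.pow_right.neg_right.add_mul_left_right _
  have hnq : IsCoprime n (m ^ 2 + k * m * n - n ^ 2) := by
    rw [show m ^ 2 + k * m * n - n ^ 2 = m ^ 2 + n * (k * m - n) by ring]
    exact hmn.symm.pow_right.add_mul_left_right _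
  obtain ⟨e, he⟩ : ∃ e, n = e ^ 2 :=
    exists_eq_even_pow_of_mul_eq_pow even_two (hmn.symm.mul_right hnq) hn.le
      (show n * (m * (m ^ 2 + k * m * n - n ^ 2)) = y ^ 2 by rw [h]; ring)
  obtain ⟨d, hd⟩ := Int.sq_of_isCoprime (hmn.mul_right hmq)
    (show m * (n * (m ^ 2 + k * m * n - n ^ 2)) = y ^ 2 by rw [h]; ring)
  have he0 : e ≠ 0 := by rintro rfl; simp [he] at hn
  have hd0 : d ≠ 0 := by rintro rfl; simp [hm] at hd
  have hde : IsCoprime d e := by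
    refine (IsCoprime.pow_iff two_pos two_pos).mp ?_
    rcases hd with hd | hd
    · rwa [← hd, ← he]
    · rwa [← neg_eq_iff_eq_neg.mpr hd, ← he, IsCoprime.neg_left_iff]
  have exists_sq {q : ℤ} (hq : y ^ 2 = (d * e) ^ 2 * q) : ∃ z, z ^ 2 = q := by
    obtain ⟨z, rfl⟩ : d * e ∣ y := (Int.pow_dvd_pow_iff two_ne_zero).mp ⟨q, hq⟩
    rw [mul_pow] at hq
    exact ⟨z, mul_left_cancel₀ (pow_ne_zero 2 (mul_ne_zero hd0 he0)) hq⟩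
  rcases hd with hd | hd
  · obtain ⟨z, hz⟩ := exists_sq (q := d ^ 4 + k * d ^ 2 * e ^ 2 - e ^ 4) (by rw [h, hd, he]; ring)
    exact ⟨d, e, z, ⟨hde, hz⟩, he0, .inl ⟨hd, he⟩⟩
  · obtain ⟨z, hz⟩ := exists_sq (q := e ^ 4 + k * e ^ 2 * d ^ 2 - d ^ 4) (by rw [h, hd, he]; ring)
    exact ⟨e, d, z, ⟨hde.symm, hz⟩, hd0, .inr ⟨hd, he⟩⟩

lemma isSquare_num_mul_den_mul {x y : ℚ} (h : y ^ 2 = x * (x ^ 2 + k * x - 1)) :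
    IsSquare (x.num * x.den * (x.num ^ 2 + k * x.num * x.den - x.den ^ 2)) := by
  rw [← Rat.isSquare_intCast_iff, isSquare_iff_exists_sq]
  refine ⟨y * x.den ^ 2, ?_⟩
  push_cast
  rw [← Rat.mul_den_eq_num x]
  linear_combination -(x.den : ℚ) ^ 4 * h

theorem eq_zero_or_eq_one_or_eq_neg_one_of_sq_eq (hk : Prime (k ^ 2 + 4)) {x y : ℚ}
    (h : y ^ 2 = x * (x ^ 2 + k * x - 1)) : x = 0 ∨ k = 1 ∧ (x = 1 ∨ x = -1) := by
  refine or_iff_not_imp_left.mpr fun hx ↦ ?_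
  obtain ⟨w, hw⟩ := isSquare_num_mul_den_mul h
  obtain ⟨r, s, z, hrs, hs, hx'⟩ := exists_isQuarticPoint_of_sq_eq (Rat.num_ne_zero.mpr hx)
    (Int.natCast_pos.mpr x.den_pos) x.isCoprime_num_den ((sq w).trans hw.symm)
  obtain ⟨hk1, hr1, hs1⟩ := hrs.eq_one_and_sq_eq_one hk hs
  rw [hr1, hs1] at hx'
  refine ⟨hk1, hx'.imp ?_ ?_⟩ <;> rintro ⟨hnum, hden⟩ <;>
    rw [← Rat.num_div_den x, hnum, ← Int.cast_natCast, hden] <;> norm_num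

end RationalPoints

theorem stmt_6 :
    {p : ℚ × ℚ | p.2 ^ 2 = p.1 ^ 3 - 108 * p.1 + 297} =
      {((3 : ℚ), (0 : ℚ)), (-6, 27), (-6, -27), (12, 27), (12, -27)} := by
  ext ⟨V, U⟩
  simp only [Set.mem_ofPred_eq, Set.mem_insert_iff, Set.mem_singleton_iff, Prod.mk.injEq]
  refine ⟨fun h ↦ ?_, ?_⟩
  · have hxy : (U / 27) ^ 2 = (V - 3) / 9 * (((V - 3) / 9) ^ 2 + (1 : ℤ) * ((V - 3) / 9) - 1) := by
      push_cast
      linear_combination h / 729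
    have hprime : Prime ((1 : ℤ) ^ 2 + 4) := by norm_num [Int.prime_iff_natAbs_prime]
    have hV : V = 3 ∨ V = 12 ∨ V = -6 := by
      rcases eq_zero_or_eq_one_or_eq_neg_one_of_sq_eq hprime hxy with hx | ⟨-, hx | hx⟩
      · exact .inl (by linarith)
      · exact .inr (.inl (by linarith))
      · exact .inr (.inr (by linarith))
    have hU (hU : U ^ 2 = 27 ^ 2) : U = 27 ∨ U = -27 := sq_eq_sq_iff_eq_or_eq_neg.mp hU
    rcases hV with rfl | rfl | rfl
    · exact .inl ⟨rfl, sq_eq_zero_iff.mp (by rw [h]; norm_num)⟩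
    · rcases hU (by rw [h]; norm_num) with rfl | rfl <;> simp
    · rcases hU (by rw [h]; norm_num) with rfl | rfl <;> simp
  · rintro (⟨rfl, rfl⟩ | ⟨rfl, rfl⟩ | ⟨rfl, rfl⟩ | ⟨rfl, rfl⟩ | ⟨rfl, rfl⟩) <;> norm_num
end

section
/- The set of rational solutions (V, U) of the equation U² = V³ + 54·V + 189 is exactly {(−3, 0), (6, 27), (6, −27)}. -/
/-!
Translating the 2-torsion point to the origin and scaling, `V = 9 X - 3`, `U = 27 Y`, turns the
curve into `Y² = X (X² - X + 1)`. If `X = s / t ≠ 0` in lowest terms, then `s t (s² - s t + t²)` is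
a square with coprime positive factors, so `s t = z²` and `s² - s t + t²` is a square. Since
`(s - t)² + z² = s² - s t + t²` and `(s - t)² + (2 z)² = (s + t)²`, there are right triangles with
legs `s - t, z` and `s - t, 2 z`. Nondegenerate triangles with legs `x, y` and `x, 2 y` do not
exist, hence `s = t` and `X = 1`.

The last point is an infinite descent on `y`, with `x, y` coprime and `x` odd. Parametrizing both
triangles gives `x = r² - s² = u² - v²` and `y = 2 r s = u v`. If `u = 2 m`, write `m = a b`,
`r = a c`, `s = b d`, `v = c d`; then `a² (4 b² - c²) = d² (c² - b²)`, which forces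
`d² + a² = b²` and `d² + 4 a² = c²`, so `d, a` is a pair of the same kind with `2 a ∣ y`. The case
of even `v` is symmetric.
-/

lemma exists_eq_mul_of_mul_eq_mul_of_isCoprime {R : Type*} [CommRing R] {a b c d : R}
    (hab : IsCoprime a b) (h : a * c = b * d) : ∃ k, c = b * k ∧ d = a * k := by
  obtain ⟨u, v, huv⟩ := hab
  exact ⟨u * d + v * c, by linear_combination u * h - c * huv,
    by linear_combination -v * h - d * huv⟩

lemma isSquare_left_of_isCoprime_of_isSquare_mul {a b : ℤ} (hab : IsCoprime a b) (ha : 0 ≤ a)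
    (h : IsSquare (a * b)) : IsSquare a := by
  obtain ⟨c, hc⟩ := isSquare_iff_exists_sq _ |>.mp h
  obtain ⟨w, rfl | rfl⟩ := Int.sq_of_isCoprime hab hc
  · exact .sq w
  · obtain rfl : w = 0 := by nlinarith
    simp

lemma isSquare_sq_mul_iff {R : Type*} [CommRing R] [IsDomain R] [IsIntegrallyClosed R]
    {g a : R} (hg : g ≠ 0) : IsSquare (g ^ 2 * a) ↔ IsSquare a := by
  refine ⟨fun h ↦ ?_, (IsSquare.sq g).mul⟩
  obtain ⟨c, hc⟩ := isSquare_iff_exists_sq _ |>.mp h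
  obtain ⟨w, rfl⟩ : g ∣ c := (IsIntegrallyClosed.pow_dvd_pow_iff two_ne_zero).mp ⟨a, hc.symm⟩
  exact ⟨w, mul_left_cancel₀ (pow_ne_zero 2 hg) (by linear_combination hc)⟩

lemma exists_sq_sub_sq_of_isSquare_sq_add_sq {x y : ℤ} (hxy : IsCoprime x y) (hx : Odd x)
    (h : IsSquare (x ^ 2 + y ^ 2)) :
    ∃ r s, IsCoprime r s ∧ x = r ^ 2 - s ^ 2 ∧ y = 2 * r * s := by
  obtain ⟨z, hz⟩ := h
  have hz0 : z ≠ 0 := by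
    rintro rfl
    have hx0 : x = 0 := by nlinarith [sq_nonneg x, sq_nonneg y]
    simp [hx0] at hx
  have htriple : PythagoreanTriple x y |z| := by
    unfold PythagoreanTriple
    rw [abs_mul_abs_self]
    linear_combination hz
  obtain ⟨r, s, hxrs, hyrs, -, hrs, -⟩ := htriple.coprime_classification'
    (Int.isCoprime_iff_gcd_eq_one.mp hxy) (Int.odd_iff.mp hx) (abs_pos.mpr hz0)
  exact ⟨r, s, Int.isCoprime_iff_gcd_eq_one.mpr hrs, hxrs, hyrs⟩

/-- A coprime pair `x, y` with `x` odd for which `x, y` and `x, 2 * y` are both the legs of right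
triangles with integer sides; in Euler's terminology, the forms `X² + Y²` and `X² + 4 Y²`
are concordant at `(x, y)`. The triangles may be degenerate. -/
structure PrimitiveConcordant (x y : ℤ) : Prop where
  isCoprime : IsCoprime x y
  odd : Odd x
  isSquare_sq_add_sq : IsSquare (x ^ 2 + y ^ 2)
  isSquare_sq_add_two_mul_sq : IsSquare (x ^ 2 + (2 * y) ^ 2)

namespace PrimitiveConcordant

lemma of_sq_mul_eq_sq_mul {a b c d : ℤ} (had : IsCoprime a d) (hbc : IsCoprime b c)
    (hc : Odd c) (hd : Odd d)
    (h : a ^ 2 * ((2 * b) ^ 2 - c ^ 2) = d ^ 2 * (c ^ 2 - b ^ 2)) : PrimitiveConcordant d a := by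
  obtain ⟨k, hdk, hak⟩ := exists_eq_mul_of_mul_eq_mul_of_isCoprime had.pow h
  have hbk : 3 * b ^ 2 = k * (a ^ 2 + d ^ 2) := by linear_combination hdk + hak
  have hck : 3 * c ^ 2 = k * (4 * a ^ 2 + d ^ 2) := by linear_combination hdk + 4 * hak
  have hk_dvd : k ∣ 3 := by
    obtain ⟨u, v, huv⟩ : IsCoprime (b ^ 2) (c ^ 2) := hbc.pow
    exact ⟨u * (a ^ 2 + d ^ 2) + v * (4 * a ^ 2 + d ^ 2),
      by linear_combination u * hbk + v * hck - 3 * huv⟩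
  have hk_pos : 0 < k := by
    have hc_pos : 0 < c ^ 2 := by
      have : c ≠ 0 := by rintro rfl; simp at hc
      positivity
    exact pos_of_mul_pos_left (show 0 < k * (4 * a ^ 2 + d ^ 2) by linarith) (by positivity)
  have hk : k = 3 := by
    have hk_le : k ≤ 3 := Int.le_of_dvd three_pos hk_dvd
    have hk_ne_one : k ≠ 1 := by
      rintro rfl
      have : c ^ 2 + d ^ 2 = 4 * b ^ 2 := by linear_combination -hdk
      have := Int.sq_mod_four_eq_one_of_odd hc
      have := Int.sq_mod_four_eq_one_of_odd hd
      omega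
    have hk_ne_two : k ≠ 2 := by rintro rfl; norm_num at hk_dvd
    omega
  subst hk
  exact ⟨had.symm, hd, ⟨b, by linarith⟩, ⟨c, by linarith⟩⟩

lemma exists_dvd_of_mul_eq_mul {m v r s : ℤ} (hmv : IsCoprime m v) (hrs : IsCoprime r s)
    (hv : Odd v) (hmul : m * v = r * s) (hsq : (2 * m) ^ 2 - v ^ 2 = r ^ 2 - s ^ 2)
    (hm : m ≠ 0) : ∃ x y, PrimitiveConcordant x y ∧ y ∣ m := by
  obtain ⟨a, b, ⟨c, rfl⟩, ⟨d, rfl⟩, rfl⟩ := exists_dvd_and_dvd_of_dvd_mul (Dvd.intro _ hmul)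
  obtain rfl : v = c * d := mul_left_cancel₀ hm (by linear_combination hmul)
  exact ⟨d, a, of_sq_mul_eq_sq_mul hmv.of_mul_left_left.of_mul_right_right
    hrs.of_mul_left_right.of_mul_right_left.symm (Int.Odd.of_mul_left hv) (Int.Odd.of_mul_right hv)
    (by linear_combination hsq), dvd_mul_right a b⟩

lemma exists_two_mul_dvd {x y : ℤ} (h : PrimitiveConcordant x y) :
    ∃ x' y', PrimitiveConcordant x' y' ∧ 2 * y' ∣ y := by
  rcases eq_or_ne y 0 with rfl | hy
  · exact ⟨x, 0, h, by simp⟩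
  obtain ⟨r, s, hrs, hxrs, hyrs⟩ :=
    exists_sq_sub_sq_of_isSquare_sq_add_sq h.isCoprime h.odd h.isSquare_sq_add_sq
  have hx2 : IsCoprime x 2 := Int.isCoprime_two_right.mpr h.odd
  obtain ⟨u, v, huv, hxuv, hyuv⟩ := exists_sq_sub_sq_of_isSquare_sq_add_sq
    (hx2.mul_right h.isCoprime) h.odd h.isSquare_sq_add_two_mul_sq
  obtain rfl : y = u * v := by linarith
  have hparity : Odd u ↔ Even v := by simpa [hxuv, parity_simps] using h.odd
  rcases Int.even_or_odd' u with ⟨m, rfl | hu⟩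
  · have hv : Odd v := Int.not_even_iff_odd.mp (hparity.not.mp (by simp))
    obtain ⟨x', y', h', hy'm⟩ := exists_dvd_of_mul_eq_mul huv.of_mul_left_right hrs hv
      (by linarith) (hxuv.symm.trans hxrs)
      (right_ne_zero_of_mul (left_ne_zero_of_mul hy))
    exact ⟨x', y', h', (mul_dvd_mul_left 2 hy'm).mul_right v⟩
  · obtain ⟨m, rfl⟩ : 2 ∣ v := (hparity.mp ⟨_, hu⟩).two_dvd
    obtain ⟨x', y', h', hy'm⟩ := exists_dvd_of_mul_eq_mul huv.of_mul_right_right.symm hrs.symm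
      ⟨_, hu⟩ (by linarith) (by linarith)
      (right_ne_zero_of_mul (right_ne_zero_of_mul hy))
    exact ⟨x', y', h', (mul_dvd_mul_left 2 hy'm).mul_left u⟩

lemma two_pow_dvd (n : ℕ) {x y : ℤ} (h : PrimitiveConcordant x y) : 2 ^ n ∣ y := by
  induction n generalizing x y with
  | zero => simp
  | succ n ih =>
    obtain ⟨x', y', h', hy'⟩ := h.exists_two_mul_dvd
    exact pow_succ' (2 : ℤ) n ▸ (mul_dvd_mul_left 2 (ih h')).trans hy'

lemma eq_zero {x y : ℤ} (h : PrimitiveConcordant x y) : y = 0 := by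
  refine Int.eq_zero_of_abs_lt_dvd (h.two_pow_dvd y.natAbs) ?_
  rw [Int.abs_eq_natAbs]
  exact_mod_cast Nat.lt_two_pow_self

end PrimitiveConcordant

lemma eq_zero_or_eq_zero_of_isSquare_of_isCoprime {x y : ℤ} (hxy : IsCoprime x y)
    (h₁ : IsSquare (x ^ 2 + y ^ 2)) (h₂ : IsSquare (x ^ 2 + (2 * y) ^ 2)) : x = 0 ∨ y = 0 := by
  rcases Int.even_or_odd' x with ⟨m, rfl | hx⟩
  · -- Halving the second triangle exchanges the roles of the legs.
    have hy : Odd y := Int.isCoprime_two_left.mp hxy.of_mul_left_left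
    have h₂' : IsSquare (y ^ 2 + m ^ 2) := (isSquare_sq_mul_iff two_ne_zero).mp <| by
      rwa [mul_add, ← mul_pow, ← mul_pow, add_comm]
    have hm : PrimitiveConcordant y m := ⟨hxy.of_mul_left_right.symm, hy, h₂', by rwa [add_comm]⟩
    simp [hm.eq_zero]
  · exact .inr (PrimitiveConcordant.mk hxy ⟨_, hx⟩ h₁ h₂).eq_zero

theorem eq_zero_or_eq_zero_of_isSquare_sq_add_sq {x y : ℤ}
    (h₁ : IsSquare (x ^ 2 + y ^ 2)) (h₂ : IsSquare (x ^ 2 + (2 * y) ^ 2)) : x = 0 ∨ y = 0 := by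
  by_contra! hxy
  obtain ⟨g, x, y, hg, hgcd, rfl, rfl⟩ := Int.exists_gcd_one' (Int.gcd_pos_of_ne_zero_left y hxy.1)
  have hg0 : (g : ℤ) ≠ 0 := by exact_mod_cast hg.ne'
  have h₁' : IsSquare (x ^ 2 + y ^ 2) := (isSquare_sq_mul_iff hg0).mp <| by
    rwa [mul_add, ← mul_pow, ← mul_pow, mul_comm _ x, mul_comm _ y]
  have h₂' : IsSquare (x ^ 2 + (2 * y) ^ 2) := (isSquare_sq_mul_iff hg0).mp <| by
    rwa [mul_add, ← mul_pow, ← mul_pow, mul_comm _ x, mul_comm _ (2 * y), mul_assoc]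
  rcases eq_zero_or_eq_zero_of_isSquare_of_isCoprime (Int.isCoprime_iff_gcd_eq_one.mpr hgcd)
    h₁' h₂' with rfl | rfl <;> simp at hxy

lemma mul_eq_zero_or_eq_of_isSquare_sq_sub_mul_add_sq {s t : ℤ} (h₁ : IsSquare (s * t))
    (h₂ : IsSquare (s ^ 2 - s * t + t ^ 2)) : s * t = 0 ∨ s = t := by
  obtain ⟨z, hz⟩ := h₁
  have hsmall : IsSquare ((s - t) ^ 2 + z ^ 2) := by
    convert h₂ using 1
    linear_combination -hz
  have hlarge : IsSquare ((s - t) ^ 2 + (2 * z) ^ 2) := ⟨s + t, by linear_combination -4 * hz⟩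
  rcases eq_zero_or_eq_zero_of_isSquare_sq_add_sq hsmall hlarge with hst | rfl
  · exact .inr (sub_eq_zero.mp hst)
  · exact .inl (by simpa using hz)

lemma isCoprime_mul_sq_sub_mul_add_sq {R : Type*} [CommRing R] {s t : R} (h : IsCoprime s t) :
    IsCoprime (s * t) (s ^ 2 - s * t + t ^ 2) := by
  have hs : IsCoprime s (s ^ 2 - s * t + t ^ 2) := by
    convert (h.pow_right (n := 2)).add_mul_left_right (s - t) using 1
    ring
  have ht : IsCoprime t (s ^ 2 - s * t + t ^ 2) := by
    convert (h.symm.pow_right (n := 2)).add_mul_left_right (t - s) using 1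
    ring
  exact hs.mul_left ht

lemma isSquare_num_mul_den_mul_of_isSquare {X : ℚ} (h : IsSquare (X * (X ^ 2 - X + 1))) :
    IsSquare (X.num * X.den * (X.num ^ 2 - X.num * X.den + (X.den : ℤ) ^ 2)) := by
  have hcast : ((X.num * X.den * (X.num ^ 2 - X.num * X.den + (X.den : ℤ) ^ 2) : ℤ) : ℚ) =
      X * (X ^ 2 - X + 1) * ((X.den : ℚ) ^ 2) ^ 2 := by
    push_cast
    rw [← Rat.mul_den_eq_num]
    ring
  rw [← Rat.isSquare_intCast_iff, hcast]
  exact h.mul (.sq _)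

lemma eq_zero_or_eq_one_of_isSquare_mul_sq_sub_add_one {X : ℚ}
    (h : IsSquare (X * (X ^ 2 - X + 1))) : X = 0 ∨ X = 1 := by
  have hX : 0 ≤ X := nonneg_of_mul_nonneg_left h.nonneg (by nlinarith [sq_nonneg (X - 1 / 2)])
  have hsq := isSquare_num_mul_den_mul_of_isSquare h
  have hprod : 0 ≤ X.num * X.den := mul_nonneg (Rat.num_nonneg.mpr hX) (by positivity)
  have hquad : 0 ≤ X.num ^ 2 - X.num * X.den + (X.den : ℤ) ^ 2 := by
    nlinarith [sq_nonneg (X.num - X.den)]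
  have hcop := isCoprime_mul_sq_sub_mul_add_sq X.isCoprime_num_den
  rcases mul_eq_zero_or_eq_of_isSquare_sq_sub_mul_add_sq
    (isSquare_left_of_isCoprime_of_isSquare_mul hcop hprod hsq)
    (isSquare_left_of_isCoprime_of_isSquare_mul hcop.symm hquad (by rwa [mul_comm]))
    with hzero | hone
  · left
    simpa using hzero
  · right
    rw [← Rat.num_div_den X, hone]
    simp

theorem stmt_7 :
    {p : ℚ × ℚ | p.2 ^ 2 = p.1 ^ 3 + 54 * p.1 + 189} =
      {((-3 : ℚ), (0 : ℚ)), (6, 27), (6, -27)} := by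
  ext ⟨V, U⟩
  simp only [Set.mem_ofPred_eq, Set.mem_insert_iff, Set.mem_singleton_iff, Prod.mk.injEq]
  constructor
  · intro hcurve
    obtain hX | hX := eq_zero_or_eq_one_of_isSquare_mul_sq_sub_add_one (X := (V + 3) / 9)
      ⟨U / 27, by linear_combination -hcurve / 729⟩
    · obtain rfl : V = -3 := by linarith
      have hU : U ^ 2 = 0 := by linear_combination hcurve
      exact .inl ⟨rfl, pow_eq_zero_iff two_ne_zero |>.mp hU⟩
    · obtain rfl : V = 6 := by linarith
      have hU : U ^ 2 = 27 ^ 2 := by linear_combination hcurve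
      exact .inr ((sq_eq_sq_iff_eq_or_eq_neg.mp hU).imp (⟨rfl, ·⟩) (⟨rfl, ·⟩))
  · rintro (⟨rfl, rfl⟩ | ⟨rfl, rfl⟩ | ⟨rfl, rfl⟩) <;> norm_num
end

section
/- The set of rational solutions (V, U) of the equation U² = V³ + 1 is exactly {(−1, 0), (0, 1), (0, −1), (2, 3), (2, −3)}. -/
/-!
A rational point with `t = V + 1` satisfies `U² = t (t² - 3t + 3)`, and comparing square classes
shows that `t` or `t / 3` is a square. Either way this gives a rational point on the quartic
`y² = x⁴ - 3x² + 3`, and infinite descent shows that such a point has `x² = 1`.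

For the descent write `2x = L / w` in lowest terms, so that `(4w²y)² = (L² - 6w²)² + 12w⁴`. The
difference of squares exhibits `3w⁴` as a product of two coprime factors, hence of `v⁴` and `3u⁴`
with `uv = ±w`. The resulting equation `L² = (v² + 3u²)² - 12u⁴` likewise splits `3u⁴` into `g⁴` and
`3k⁴`, and now `g / k` is the `x`-coordinate of a new point on the quartic, with `k ∣ w`. Measuring
points by the denominator of `2x` rather than of `x` makes a case split on parity unnecessary. The
denominator can fail to drop only when `g² = k²`, which already forces `x² = 1`.
-/

lemma exists_nat_pow_eq_of_isCoprime_of_mul_eq_pow {a b c : ℤ} {n : ℕ} (ha : 0 ≤ a)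
    (hab : IsCoprime a b) (h : a * b = c ^ n) : ∃ d : ℕ, a = (d : ℤ) ^ n := by
  obtain ⟨d, hd⟩ := exists_associated_pow_of_mul_eq_pow' hab h
  refine ⟨d.natAbs, ?_⟩
  rw [← Int.natAbs_of_nonneg ha, ← Int.associated_iff_natAbs.mp hd, Int.natAbs_pow, Nat.cast_pow]

lemma exists_nat_pow_and_prime_mul_pow_of_mul_eq {p a b w : ℤ} {n : ℕ} (hp : Prime p)
    (hp0 : 0 < p) (hn : n ≠ 0) (ha : 0 ≤ a) (hb : 0 ≤ b) (hab : IsCoprime a b)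
    (h : a * b = p * w ^ n) :
    ∃ g k : ℕ, (g * k : ℤ) = |w| ∧
      (a = g ^ n ∧ b = p * k ^ n ∨ a = p * k ^ n ∧ b = g ^ n) := by
  wlog hpb : p ∣ b generalizing a b
  · have hpa : p ∣ a := (hp.dvd_or_dvd (Dvd.intro _ h.symm)).resolve_right hpb
    obtain ⟨g, k, hgk, hpow⟩ := this hb ha hab.symm (by rw [mul_comm, h]) hpa
    exact ⟨g, k, hgk, hpow.symm.imp And.symm And.symm⟩
  obtain ⟨c, rfl⟩ := hpb
  have hc : 0 ≤ c := nonneg_of_mul_nonneg_right hb hp0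
  have hac : IsCoprime a c := hab.of_mul_right_right
  have hprod : a * c = w ^ n := mul_left_cancel₀ hp.ne_zero (by rw [← h]; ring)
  obtain ⟨g, rfl⟩ := exists_nat_pow_eq_of_isCoprime_of_mul_eq_pow ha hac hprod
  obtain ⟨k, rfl⟩ := exists_nat_pow_eq_of_isCoprime_of_mul_eq_pow hc hac.symm
    ((mul_comm _ _).trans hprod)
  refine ⟨g, k, ?_, Or.inl ⟨rfl, rfl⟩⟩
  refine (pow_left_inj₀ (by positivity) (abs_nonneg w) hn).mp ?_
  rw [← abs_pow, ← hprod, mul_pow, abs_of_nonneg (by positivity)]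

lemma exists_add_sub_mul_of_sq_eq_sq_add_four_mul {S D C : ℤ} (h : S ^ 2 = D ^ 2 + 4 * C) :
    ∃ a b : ℤ, S = a + b ∧ D = a - b ∧ a * b = C := by
  have hparity : Even (S - D) := by
    have : Even ((S - D) * (S + D)) := ⟨2 * C, by linear_combination h⟩
    rcases Int.even_mul.mp this with hsub | hadd
    · exact hsub
    · exact Int.even_sub.mpr (Int.even_add.mp hadd)
  obtain ⟨b, hb⟩ := hparity
  obtain rfl : S = D + b + b := by linarith
  exact ⟨D + b, b, rfl, by ring, by linarith⟩

lemma exists_nat_pow_add_of_sq_eq_sq_add {p S D w : ℤ} {n : ℕ} (hp : Prime p) (hp0 : 0 < p)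
    (hn : Even n) (hn0 : n ≠ 0) (hS : 0 ≤ S) (hD : IsCoprime D (p * w))
    (h : S ^ 2 = D ^ 2 + 4 * (p * w ^ n)) :
    ∃ g k : ℕ, (g * k : ℤ) = |w| ∧ S = g ^ n + p * k ^ n ∧
      (D = g ^ n - p * k ^ n ∨ D = p * k ^ n - g ^ n) := by
  obtain ⟨a, b, rfl, rfl, hab⟩ := exists_add_sub_mul_of_sq_eq_sq_add_four_mul h
  have hcop : IsCoprime a b := by
    have hdiff : IsCoprime (a - b) (a * b) :=
      hab ▸ hD.of_mul_right_left.mul_right hD.of_mul_right_right.pow_right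
    simpa using hdiff.of_mul_right_right.add_mul_right_left 1
  have hprod : 0 ≤ a * b := hab ▸ mul_nonneg hp0.le (hn.pow_nonneg w)
  obtain ⟨ha, hb⟩ : 0 ≤ a ∧ 0 ≤ b := by
    constructor <;> nlinarith
  obtain ⟨g, k, hgk, ⟨rfl, rfl⟩ | ⟨rfl, rfl⟩⟩ :=
    exists_nat_pow_and_prime_mul_pow_of_mul_eq hp hp0 hn0 ha hb hcop hab
  · exact ⟨g, k, hgk, rfl, Or.inl rfl⟩
  · exact ⟨g, k, hgk, add_comm _ _, Or.inr rfl⟩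

lemma natCast_dvd_of_dvd_sq_add_sq {p : ℕ} [Fact p.Prime] (hp : p % 4 = 3) {x y : ℤ}
    (h : (p : ℤ) ∣ x ^ 2 + y ^ 2) : (p : ℤ) ∣ x := by
  rw [← ZMod.intCast_zmod_eq_zero_iff_dvd] at h ⊢
  push_cast at h
  by_contra hx
  exact ZMod.mod_four_ne_three_of_sq_eq_neg_sq hx (eq_neg_of_add_eq_zero_left h) hp

lemma isCoprime_three_of_isSquare_quartic {L w : ℤ} (hLw : IsCoprime L w)
    (h : IsSquare ((L ^ 2 - 6 * w ^ 2) ^ 2 + 12 * w ^ 4)) : IsCoprime L 3 := by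
  refine ((Int.prime_three.coprime_iff_not_dvd).mpr ?_).symm
  rintro ⟨l, rfl⟩
  obtain ⟨N, hN⟩ := h
  obtain ⟨m, rfl⟩ : 3 ∣ N := Int.prime_three.dvd_of_dvd_pow (n := 2)
    ⟨27 * l ^ 4 - 36 * l ^ 2 * w ^ 2 + 16 * w ^ 4, by linear_combination -hN⟩
  have hw : 3 ∣ w := Int.prime_three.dvd_of_dvd_pow (n := 4)
    ⟨m ^ 2 - 9 * l ^ 4 + 12 * l ^ 2 * w ^ 2 - 5 * w ^ 4, by linarith⟩
  exact Int.prime_three.not_isUnit (hLw.isUnit_of_dvd' (Dvd.intro _ rfl) hw)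

lemma exists_quartic_descent {L w : ℤ} (hLw : IsCoprime L w)
    (h : IsSquare ((L ^ 2 - 6 * w ^ 2) ^ 2 + 12 * w ^ 4)) :
    ∃ g k v : ℤ, w ^ 2 = g ^ 2 * k ^ 2 * v ^ 2 ∧ v ^ 2 = g ^ 4 - 3 * g ^ 2 * k ^ 2 + 3 * k ^ 4 ∧
      L ^ 2 = (v ^ 2 + 3 * (g ^ 2 * k ^ 2)) ^ 2 - 12 * (g ^ 2 * k ^ 2) ^ 2 := by
  have hL3 : IsCoprime L 3 := isCoprime_three_of_isSquare_quartic hLw h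
  obtain ⟨N, hN⟩ := h
  have hLw3 : IsCoprime (L ^ 2 - 6 * w ^ 2) (3 * w) := by
    refine IsCoprime.mul_right ?_ ?_
    · rw [show L ^ 2 - 6 * w ^ 2 = L ^ 2 + 3 * (-2 * w ^ 2) by ring]
      exact hL3.pow_left.add_mul_left_left _
    · rw [show L ^ 2 - 6 * w ^ 2 = L ^ 2 + w * (-6 * w) by ring]
      exact hLw.pow_left.add_mul_left_left _
  obtain ⟨v, u, hvu, -, hfirst⟩ := exists_nat_pow_add_of_sq_eq_sq_add (n := 4) Int.prime_three
    three_pos (by decide) four_ne_zero (abs_nonneg N) hLw3 (by rw [sq_abs]; linear_combination -hN)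
  have hw : (v * u : ℤ) ^ 2 = w ^ 2 := by rw [hvu, sq_abs]
  have hL : (v ^ 2 + 3 * u ^ 2 : ℤ) ^ 2 = L ^ 2 + 4 * (3 * u ^ 4) := by
    rcases hfirst with hpos | hneg
    · linear_combination -hpos + 6 * hw
    · have hdvd : 3 ∣ L ^ 2 + (v ^ 2 : ℤ) ^ 2 := ⟨2 * w ^ 2 + u ^ 4, by linear_combination hneg⟩
      have h3L : 3 ∣ L := natCast_dvd_of_dvd_sq_add_sq (p := 3) rfl hdvd
      exact absurd (hL3.isUnit_of_dvd' h3L dvd_rfl) Int.prime_three.not_isUnit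
  have hLu : IsCoprime L (3 * u) := by
    refine hL3.mul_right (hLw.of_isCoprime_of_dvd_right ?_)
    exact (dvd_abs _ _).mp (hvu ▸ dvd_mul_left _ _)
  obtain ⟨g, k, hgk, hsum, -⟩ := exists_nat_pow_add_of_sq_eq_sq_add (n := 4) Int.prime_three
    three_pos (by decide) four_ne_zero (by positivity) hLu hL
  have hu : (g ^ 2 * k ^ 2 : ℤ) = u ^ 2 := by rw [← mul_pow, hgk, sq_abs]
  refine ⟨g, k, v, ?_, ?_, ?_⟩
  · rw [hu, ← hw]; ring
  · linear_combination hsum + 3 * hu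
  · rw [hu]; linear_combination -hL

lemma isSquare_num_den_of_isSquare_quartic {x : ℚ} (h : IsSquare (x ^ 4 - 3 * x ^ 2 + 3)) :
    IsSquare (((2 * x).num ^ 2 - 6 * ((2 * x).den : ℤ) ^ 2) ^ 2 + 12 * ((2 * x).den : ℤ) ^ 4) := by
  have hnum : ((2 * x).num : ℚ) = 2 * x * (2 * x).den := (Rat.mul_den_eq_num _).symm
  rw [← Rat.isSquare_intCast_iff]
  push_cast
  rw [hnum, show ((2 * x * (2 * x).den) ^ 2 - 6 * ((2 * x).den : ℚ) ^ 2) ^ 2 +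
    12 * ((2 * x).den : ℚ) ^ 4 =
      (x ^ 4 - 3 * x ^ 2 + 3) * (4 * ((2 * x).den : ℚ) ^ 2) ^ 2 by ring]
  exact h.mul (IsSquare.sq _)

lemma isSquare_quartic_div {g k v : ℤ} (hk : k ≠ 0)
    (hv : v ^ 2 = g ^ 4 - 3 * g ^ 2 * k ^ 2 + 3 * k ^ 4) :
    IsSquare ((g / k : ℚ) ^ 4 - 3 * (g / k : ℚ) ^ 2 + 3) := by
  have hvq : (v : ℚ) ^ 2 = g ^ 4 - 3 * g ^ 2 * k ^ 2 + 3 * k ^ 4 := by exact_mod_cast hv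
  have hkq : (k : ℚ) ≠ 0 := by exact_mod_cast hk
  refine ⟨v / k ^ 2, ?_⟩
  rw [div_mul_div_comm, ← sq (v : ℚ), hvq]
  field_simp

lemma sq_eq_sq_of_sq_mul_sq_eq_one {g k v : ℤ} (hk : k ≠ 0) (hgv : g ^ 2 * v ^ 2 = 1)
    (hv : v ^ 2 = g ^ 4 - 3 * g ^ 2 * k ^ 2 + 3 * k ^ 4) : g ^ 2 = k ^ 2 := by
  have hg : g ^ 2 = 1 := Int.eq_one_of_mul_eq_one_right (sq_nonneg g) hgv
  have hv1 : v ^ 2 = 1 := Int.eq_one_of_mul_eq_one_left (sq_nonneg v) hgv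
  have hk1 : 3 * k ^ 2 * (k ^ 2 - 1) = 0 := by
    linear_combination hv1 - hv - (g ^ 2 + 1 - 3 * k ^ 2) * hg
  have hk2 : 3 * k ^ 2 ≠ 0 := by positivity
  rw [hg, sub_eq_zero.mp ((mul_eq_zero.mp hk1).resolve_left hk2)]

lemma sq_eq_one_of_num_sq_eq_four_mul_den_sq {x : ℚ}
    (h : (2 * x).num ^ 2 = 4 * ((2 * x).den : ℤ) ^ 2) : x ^ 2 = 1 := by
  have hq : ((2 * x).num : ℚ) ^ 2 = 4 * ((2 * x).den : ℚ) ^ 2 := by exact_mod_cast h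
  have hden : 4 * ((2 * x).den : ℚ) ^ 2 ≠ 0 := by simp
  rw [← Rat.mul_den_eq_num] at hq
  exact mul_right_cancel₀ hden (by linear_combination hq)

theorem sq_eq_one_of_isSquare_quartic {x : ℚ} (h : IsSquare (x ^ 4 - 3 * x ^ 2 + 3)) :
    x ^ 2 = 1 := by
  induction hw : (2 * x).den using Nat.strong_induction_on generalizing x with
  | _ w ih =>
  have hw0 : (w : ℤ) ≠ 0 := by exact_mod_cast hw ▸ (2 * x).den_ne_zero
  obtain ⟨g, k, v, hgkv, hv, hL⟩ := exists_quartic_descent (Rat.isCoprime_num_den (2 * x))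
    (isSquare_num_den_of_isSquare_quartic h)
  rw [hw] at hgkv
  suffices hgk : g ^ 2 = k ^ 2 by
    have hvk : v ^ 2 = k ^ 4 := by rw [hv]; linear_combination (g ^ 2 - 2 * k ^ 2) * hgk
    have hnum : (2 * x).num ^ 2 = 4 * (w : ℤ) ^ 2 := by rw [hL, hgkv, hgk, hvk]; ring
    exact sq_eq_one_of_num_sq_eq_four_mul_den_sq (hw.symm ▸ hnum)
  have hk : k ≠ 0 := by
    rintro rfl
    exact pow_ne_zero 2 hw0 (by simpa using hgkv)
  have hkw : k ∣ w := (Int.pow_dvd_pow_iff two_ne_zero).mp ⟨g ^ 2 * v ^ 2, by rw [hgkv]; ring⟩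
  have hden : ((2 * (g / k) : ℚ).den : ℤ) ∣ k := by
    have : (2 * (g / k) : ℚ) = Rat.divInt (2 * g) k := by
      rw [Rat.divInt_eq_div]; push_cast; ring
    exact this ▸ Rat.den_dvd _ _
  have hdenw : (2 * (g / k) : ℚ).den ∣ w := Int.natCast_dvd_natCast.mp (hden.trans hkw)
  rcases (Nat.le_of_dvd (by omega) hdenw).lt_or_eq with hlt | heq
  · have hgk := ih _ hlt (isSquare_quartic_div hk hv) rfl
    rw [div_pow, div_eq_one_iff_eq (by exact_mod_cast pow_ne_zero 2 hk)] at hgk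
    exact_mod_cast hgk
  · have hkw2 : k ^ 2 = (w : ℤ) ^ 2 :=
      Int.natAbs_eq_iff_sq_eq.mp (Int.natAbs_eq_of_dvd_dvd hkw (heq ▸ hden))
    refine sq_eq_sq_of_sq_mul_sq_eq_one hk (mul_left_cancel₀ (pow_ne_zero 2 hk) ?_) hv
    linear_combination -hkw2 - hgkv

lemma isSquare_and_isSquare_of_isSquare_mul_quadratic {a m c b : ℤ} (hc : 0 ≤ c) (hb : 0 ≤ b)
    (hcb : IsCoprime c b) (hcm : IsCoprime c m)
    (h : IsSquare (c * b * (c ^ 2 + a * c * b + m * b ^ 2))) : IsSquare c ∧ IsSquare b := by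
  set Q := c ^ 2 + a * c * b + m * b ^ 2 with hQ
  have hcQ : IsCoprime c Q := by
    rw [hQ, show c ^ 2 + a * c * b + m * b ^ 2 = m * b ^ 2 + c * (c + a * b) by ring]
    exact (hcm.mul_right hcb.pow_right).add_mul_left_right _
  have hbQ : IsCoprime b Q := by
    rw [hQ, show c ^ 2 + a * c * b + m * b ^ 2 = c ^ 2 + b * (a * c + m * b) by ring]
    exact hcb.symm.pow_right.add_mul_left_right _
  obtain ⟨z, hz⟩ := h
  obtain ⟨x, hx⟩ := exists_nat_pow_eq_of_isCoprime_of_mul_eq_pow (n := 2) (c := z) hc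
    (hcb.mul_right hcQ) (by linear_combination hz)
  obtain ⟨y, hy⟩ := exists_nat_pow_eq_of_isCoprime_of_mul_eq_pow (n := 2) (c := z) hb
    (hcb.symm.mul_right hbQ) (by linear_combination hz)
  exact ⟨hx ▸ IsSquare.sq _, hy ▸ IsSquare.sq _⟩

lemma isSquare_num_den_of_isSquare_mul_quadratic {a m : ℤ} {t : ℚ}
    (h : IsSquare (t * (t ^ 2 + a * t + m))) :
    IsSquare (t.num * t.den * (t.num ^ 2 + a * t.num * t.den + m * (t.den : ℤ) ^ 2)) := by
  have hnum : (t.num : ℚ) = t * t.den := (Rat.mul_den_eq_num t).symm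
  rw [← Rat.isSquare_intCast_iff]
  push_cast
  rw [hnum, show t * t.den * t.den * ((t * t.den) ^ 2 + a * (t * t.den) * t.den +
    m * (t.den : ℚ) ^ 2) = t * (t ^ 2 + a * t + m) * ((t.den : ℚ) ^ 2) ^ 2 by ring]
  exact h.mul (IsSquare.sq _)

lemma isSquare_or_isSquare_div_of_isSquare_mul_quadratic {p a : ℤ} {t : ℚ} (hp : Prime p)
    (hp0 : 0 < p) (ht : 0 ≤ t) (h : IsSquare (t * (t ^ 2 + a * t + p))) :
    IsSquare t ∨ IsSquare (t / p) := by
  have hsq := isSquare_num_den_of_isSquare_mul_quadratic h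
  have hcb : IsCoprime t.num t.den := Rat.isCoprime_num_den t
  have hc : 0 ≤ t.num := Rat.num_nonneg.mpr ht
  have hb : 0 ≤ (t.den : ℤ) := Int.natCast_nonneg _
  have htcb : t = t.num / (t.den : ℤ) := by exact_mod_cast (Rat.num_div_den t).symm
  generalize t.num = c, (t.den : ℤ) = b at hsq hcb hc hb htcb
  by_cases hpc : p ∣ c
  · right
    obtain ⟨d, rfl⟩ := hpc
    have hd : 0 ≤ d := nonneg_of_mul_nonneg_right hc hp0
    have hpq : (p : ℚ) ≠ 0 := by exact_mod_cast hp0.ne'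
    have hswap : IsSquare (b * d * (b ^ 2 + a * b * d + p * d ^ 2)) := by
      obtain ⟨z, hz⟩ := hsq
      obtain ⟨y, rfl⟩ : p ∣ z := hp.dvd_of_dvd_pow (n := 2)
        ⟨d * b * ((p * d) ^ 2 + a * (p * d) * b + p * b ^ 2), by linear_combination -hz⟩
      refine ⟨y, mul_left_cancel₀ (pow_ne_zero 2 hp.ne_zero) ?_⟩
      linear_combination hz
    obtain ⟨hbsq, hdsq⟩ := isSquare_and_isSquare_of_isSquare_mul_quadratic hb hd
      hcb.of_mul_left_right.symm hcb.of_mul_left_left.symm hswap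
    rw [show t / p = d / b by rw [htcb]; push_cast; field_simp]
    exact (Rat.isSquare_intCast_iff.mpr hdsq).div (Rat.isSquare_intCast_iff.mpr hbsq)
  · left
    obtain ⟨hcsq, hbsq⟩ := isSquare_and_isSquare_of_isSquare_mul_quadratic hc hb hcb
      ((hp.coprime_iff_not_dvd).mpr hpc).symm hsq
    rw [htcb]
    exact (Rat.isSquare_intCast_iff.mpr hcsq).div (Rat.isSquare_intCast_iff.mpr hbsq)

lemma eq_zero_or_one_or_three_of_isSquare_mul_quadratic {t : ℚ}
    (h : IsSquare (t * (t ^ 2 - 3 * t + 3))) : t = 0 ∨ t = 1 ∨ t = 3 := by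
  rcases eq_or_ne t 0 with rfl | ht0
  · exact Or.inl rfl
  right
  have ht : 0 ≤ t := by
    have hpos : 0 < t ^ 2 - 3 * t + 3 := by nlinarith [sq_nonneg (2 * t - 3)]
    exact nonneg_of_mul_nonneg_left h.nonneg hpos
  have hcurve : IsSquare (t * (t ^ 2 + (-3 : ℤ) * t + (3 : ℤ))) := by
    convert h using 2; push_cast; ring
  rcases isSquare_or_isSquare_div_of_isSquare_mul_quadratic Int.prime_three three_pos ht hcurve
    with hsq | hsq
  · left
    obtain ⟨r, rfl⟩ := hsq
    have hr : r ≠ 0 := left_ne_zero_of_mul ht0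
    rw [← sq]
    refine sq_eq_one_of_isSquare_quartic ?_
    have hdiv : r ^ 4 - 3 * r ^ 2 + 3 = r * r * ((r * r) ^ 2 - 3 * (r * r) + 3) / (r * r) := by
      field_simp
    exact hdiv ▸ h.div (IsSquare.mul_self r)
  · right
    obtain ⟨r, hr⟩ := hsq
    obtain rfl : t = 3 * r ^ 2 := by push_cast at hr; linear_combination 3 * hr
    have hr : r ≠ 0 := by rintro rfl; simp at ht0
    have hinv : r⁻¹ ^ 2 = 1 := by
      refine sq_eq_one_of_isSquare_quartic ?_
      have hdiv : r⁻¹ ^ 4 - 3 * r⁻¹ ^ 2 + 3 =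
          3 * r ^ 2 * ((3 * r ^ 2) ^ 2 - 3 * (3 * r ^ 2) + 3) / (3 * r ^ 3) ^ 2 := by
        field_simp
        ring
      exact hdiv ▸ h.div (IsSquare.sq _)
    rw [inv_pow, inv_eq_one] at hinv
    rw [hinv, mul_one]

theorem stmt_8 :
    {p : ℚ × ℚ | p.2 ^ 2 = p.1 ^ 3 + 1} =
      {((-1 : ℚ), (0 : ℚ)), (0, 1), (0, -1), (2, 3), (2, -3)} := by
  ext ⟨V, U⟩
  simp only [Set.mem_ofPred_eq, Set.mem_insert_iff, Set.mem_singleton_iff, Prod.mk.injEq]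
  constructor
  · intro h
    have hsq : IsSquare ((V + 1) * ((V + 1) ^ 2 - 3 * (V + 1) + 3)) :=
      ⟨U, by linear_combination -h⟩
    rcases eq_zero_or_one_or_three_of_isSquare_mul_quadratic hsq with ht | ht | ht
    · obtain rfl : V = -1 := by linarith
      left
      exact ⟨rfl, by norm_num at h; exact h⟩
    · obtain rfl : V = 0 := by linarith
      simpa using h
    · obtain rfl : V = 2 := by linarith
      have hU : U ^ 2 = 3 ^ 2 := by rw [h]; norm_num
      rcases sq_eq_sq_iff_eq_or_eq_neg.mp hU with rfl | rfl <;> norm_num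
  · rintro (⟨rfl, rfl⟩ | ⟨rfl, rfl⟩ | ⟨rfl, rfl⟩ | ⟨rfl, rfl⟩ | ⟨rfl, rfl⟩) <;> norm_num
end

section
/- Let a, b, c, y, z be rational numbers with abc ≠ 0 and 2y − z ≠ 0, and set f(t) = a·t² + b·t + c and x = y·z/(2y − z) (so that (x + y)·z = 2·x·y). Then (f(x) + f(y))·f(z) = 2·f(x)·f(y) if and only if (y − z)²·(a²·y²·z² − 2·a·c·y² − 2·a·c·y·z + a·c·z² − 2·b·c·y + b·c·z) = 0. -/
/-!
The defect `(f x + f y) * f z - 2 * f x * f y` is affine in `f x`, and the harmonic relation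
`x * (2 * y - z) = y * z` makes `(2 * y - z) ^ 2 * f x` a polynomial in `y` and `z`. So the defect
times `(2 * y - z) ^ 2` is a polynomial in `y` and `z`, which turns out to be twice the stated one.
Its factor `(y - z) ^ 2` is forced: if `y = z + ε` then `x = z - ε + O(ε ^ 2)`, so the defect
vanishes to second order at `y = z`.
-/

theorem harmonic_iff_eq_div {K : Type*} [Field K] {x y z : K} (hyz : 2 * y - z ≠ 0) :
    (x + y) * z = 2 * x * y ↔ x = y * z / (2 * y - z) := by
  rw [eq_div_iff hyz]
  constructor <;> intro h <;> linear_combination -h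

theorem sq_mul_harmonic_defect_quadratic {R : Type*} [CommRing R] {a b c x y z : R} {f : R → R}
    (hf : ∀ t, f t = a * t ^ 2 + b * t + c) (hxyz : (x + y) * z = 2 * x * y) :
    (2 * y - z) ^ 2 * ((f x + f y) * f z - 2 * f x * f y) =
      2 * ((y - z) ^ 2 * (a ^ 2 * y ^ 2 * z ^ 2 - 2 * a * c * y ^ 2 - 2 * a * c * y * z
        + a * c * z ^ 2 - 2 * b * c * y + b * c * z)) := by
  have hx : x * (2 * y - z) = y * z := by linear_combination -hxyz
  have hfx : (2 * y - z) ^ 2 * f x =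
      a * (y * z) ^ 2 + b * (y * z) * (2 * y - z) + c * (2 * y - z) ^ 2 := by
    rw [hf, ← hx]
    ring
  calc (2 * y - z) ^ 2 * ((f x + f y) * f z - 2 * f x * f y)
      = (2 * y - z) ^ 2 * f x * (f z - 2 * f y) + (2 * y - z) ^ 2 * (f y * f z) := by ring
    _ = _ := by
      rw [hfx, hf y, hf z]
      ring

theorem stmt_9_general {R : Type*} [CommRing R] [NoZeroDivisors R] [NeZero (2 : R)]
    {a b c x y z : R} {f : R → R} (hf : ∀ t, f t = a * t ^ 2 + b * t + c)
    (hyz : 2 * y - z ≠ 0) (hxyz : (x + y) * z = 2 * x * y) :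
    (f x + f y) * f z = 2 * f x * f y ↔
      (y - z) ^ 2 * (a ^ 2 * y ^ 2 * z ^ 2 - 2 * a * c * y ^ 2 - 2 * a * c * y * z
        + a * c * z ^ 2 - 2 * b * c * y + b * c * z) = 0 := by
  rw [← sub_eq_zero, ← mul_eq_zero_iff_left (pow_ne_zero 2 hyz),
    sq_mul_harmonic_defect_quadratic hf hxyz, mul_eq_zero_iff_left two_ne_zero]

theorem stmt_9 (a b c y z : ℚ) (habc : a * b * c ≠ 0) (hyz : 2 * y - z ≠ 0) :
    let f : ℚ → ℚ := fun t => a * t ^ 2 + b * t + c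
    let x : ℚ := y * z / (2 * y - z)
    ((f x + f y) * f z = 2 * f x * f y ↔
      (y - z) ^ 2 * (a ^ 2 * y ^ 2 * z ^ 2 - 2 * a * c * y ^ 2 - 2 * a * c * y * z
        + a * c * z ^ 2 - 2 * b * c * y + b * c * z) = 0) := by
  intro f x
  exact stmt_9_general (fun _ => rfl) hyz ((harmonic_iff_eq_div hyz).mpr rfl)
end

section
/- Let a, b, c, y, z be rational numbers with abc ≠ 0 and y ≠ 0 satisfying a²·y²·z² − 2·a·c·y² − 2·a·c·y·z + a·c·z² − 2·b·c·y + b·c·z = 0. Define X = c·(a²b·y²·z + a²c·y² + abc·z + b²c)/y² and Y = bc²·(a³·y³·z + a²b·y³ + a²b·y²·z + 2a²c·y² + a²c·y·z + abc·y + abc·z + b²c)/y³. Then Y² = X³ − 3·a⁴c⁴·X + a⁴c⁴·(2a²c² − 4ab²c + b⁴). -/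
/-!
Viewed as a quadratic in `z`, the equation of `C₂` has leading coefficient `a (a y² + c)`.
Multiplying by it and putting `t = a (a y² + c) z + b c` gives the quartic model
`t (t - b c - 2 a c y) = 2 a² c y² (a y² + b y + c)`. Division by `y⁴` turns this into an equation
between `s = 1 / y` and `u = t / y²` which is quadratic in each of them. Completing the square in
`s` leaves a cubic in `u`, which becomes `E₂` after the substitution `X = b c u + a² c²`.
-/

section CommRing

variable {R : Type*} [CommRing R]

lemma sq_mul_add_eq_of_quadratic {A B C s : R} (h : A * s ^ 2 + 2 * B * s = C) :
    (A * s + B) ^ 2 = B ^ 2 + A * C := by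
  linear_combination A * h

lemma sq_eq_cubic_of_biquadratic {q m e f g s u : R}
    (h : (q * u + e) * s ^ 2 + 2 * (m * u + f) * s = u ^ 2 - g) :
    (q * ((q * u + e) * s + (m * u + f))) ^ 2 =
      (m * (q * u) + q * f) ^ 2 + (q * u + e) * ((q * u) ^ 2 - q ^ 2 * g) := by
  rw [mul_pow, sq_mul_add_eq_of_quadratic h]
  ring

/-- The coordinate `t` on `C₂` for which the equation of the curve becomes
`t (t - (b c + 2 a c y)) = 2 a² c y² (a y² + b y + c)`. It is the coordinate `a (a y² + c) z`,
in which `C₂` is monic, shifted by `b c` so that the right-hand side is divisible by `y²`. -/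
def quarticCoord (a b c y z : R) : R :=
  a * (a * y ^ 2 + c) * z + b * c

lemma quarticCoord_mul_sub_eq {a b c y z : R}
    (hC : a ^ 2 * y ^ 2 * z ^ 2 - 2 * a * c * y ^ 2 - 2 * a * c * y * z
      + a * c * z ^ 2 - 2 * b * c * y + b * c * z = 0) :
    quarticCoord a b c y z * (quarticCoord a b c y z - (b * c + 2 * (a * c) * y)) =
      y ^ 2 * (2 * a ^ 2 * c ^ 2 + 2 * (a ^ 2 * b * c) * y + 2 * a ^ 3 * c * y ^ 2) := by
  unfold quarticCoord
  linear_combination a * (a * y ^ 2 + c) * hC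

lemma weierstrass_of_biquadratic {a b c s u : R}
    (h : (b * c * u + 2 * a ^ 2 * c ^ 2) * s ^ 2 + 2 * (a * c * u + a ^ 2 * b * c) * s =
      u ^ 2 - 2 * a ^ 3 * c) :
    (b * c * ((b * c * u + 2 * a ^ 2 * c ^ 2) * s + (a * c * u + a ^ 2 * b * c))) ^ 2 =
      (b * c * u + a ^ 2 * c ^ 2) ^ 3 - 3 * a ^ 4 * c ^ 4 * (b * c * u + a ^ 2 * c ^ 2)
        + a ^ 4 * c ^ 4 * (2 * a ^ 2 * c ^ 2 - 4 * a * b ^ 2 * c + b ^ 4) := by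
  rw [sq_eq_cubic_of_biquadratic h]
  ring

end CommRing

section Field

variable {K : Type*} [Field K]

lemma biquadratic_of_quartic {q m e f g y t : K} (hy : y ≠ 0)
    (h : t * (t - (q + 2 * m * y)) = y ^ 2 * (e + 2 * f * y + g * y ^ 2)) :
    (q * (t / y ^ 2) + e) * y⁻¹ ^ 2 + 2 * (m * (t / y ^ 2) + f) * y⁻¹ = (t / y ^ 2) ^ 2 - g := by
  field_simp
  linear_combination -h

lemma X_eq_quarticCoord_div (a b c z : K) {y : K} (hy : y ≠ 0) :
    c * (a ^ 2 * b * y ^ 2 * z + a ^ 2 * c * y ^ 2 + a * b * c * z + b ^ 2 * c) / y ^ 2 =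
      b * c * (quarticCoord a b c y z / y ^ 2) + a ^ 2 * c ^ 2 := by
  unfold quarticCoord
  field_simp
  ring

lemma Y_eq_quarticCoord_div (a b c z : K) {y : K} (hy : y ≠ 0) :
    b * c ^ 2 * (a ^ 3 * y ^ 3 * z + a ^ 2 * b * y ^ 3
        + a ^ 2 * b * y ^ 2 * z + 2 * a ^ 2 * c * y ^ 2 + a ^ 2 * c * y * z
        + a * b * c * y + a * b * c * z + b ^ 2 * c) / y ^ 3 =
      b * c * ((b * c * (quarticCoord a b c y z / y ^ 2) + 2 * a ^ 2 * c ^ 2) * y⁻¹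
        + (a * c * (quarticCoord a b c y z / y ^ 2) + a ^ 2 * b * c)) := by
  unfold quarticCoord
  field_simp
  ring

theorem stmt_10_general (a b c y z : K) (hy : y ≠ 0)
    (hC : a ^ 2 * y ^ 2 * z ^ 2 - 2 * a * c * y ^ 2 - 2 * a * c * y * z
      + a * c * z ^ 2 - 2 * b * c * y + b * c * z = 0) :
    let X : K := c * (a ^ 2 * b * y ^ 2 * z + a ^ 2 * c * y ^ 2 + a * b * c * z
      + b ^ 2 * c) / y ^ 2
    let Y : K := b * c ^ 2 * (a ^ 3 * y ^ 3 * z + a ^ 2 * b * y ^ 3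
      + a ^ 2 * b * y ^ 2 * z + 2 * a ^ 2 * c * y ^ 2 + a ^ 2 * c * y * z
      + a * b * c * y + a * b * c * z + b ^ 2 * c) / y ^ 3
    Y ^ 2 = X ^ 3 - 3 * a ^ 4 * c ^ 4 * X
      + a ^ 4 * c ^ 4 * (2 * a ^ 2 * c ^ 2 - 4 * a * b ^ 2 * c + b ^ 4) := by
  intro X Y
  have hX : X = b * c * (quarticCoord a b c y z / y ^ 2) + a ^ 2 * c ^ 2 :=
    X_eq_quarticCoord_div a b c z hy
  have hY : Y = b * c * ((b * c * (quarticCoord a b c y z / y ^ 2) + 2 * a ^ 2 * c ^ 2) * y⁻¹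
      + (a * c * (quarticCoord a b c y z / y ^ 2) + a ^ 2 * b * c)) :=
    Y_eq_quarticCoord_div a b c z hy
  rw [hX, hY]
  exact weierstrass_of_biquadratic (biquadratic_of_quartic hy (quarticCoord_mul_sub_eq hC))

end Field

theorem stmt_10 (a b c y z : ℚ) (habc : a * b * c ≠ 0) (hy : y ≠ 0)
    (hC : a ^ 2 * y ^ 2 * z ^ 2 - 2 * a * c * y ^ 2 - 2 * a * c * y * z
      + a * c * z ^ 2 - 2 * b * c * y + b * c * z = 0) :
    let X : ℚ := c * (a ^ 2 * b * y ^ 2 * z + a ^ 2 * c * y ^ 2 + a * b * c * z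
      + b ^ 2 * c) / y ^ 2
    let Y : ℚ := b * c ^ 2 * (a ^ 3 * y ^ 3 * z + a ^ 2 * b * y ^ 3
      + a ^ 2 * b * y ^ 2 * z + 2 * a ^ 2 * c * y ^ 2 + a ^ 2 * c * y * z
      + a * b * c * y + a * b * c * z + b ^ 2 * c) / y ^ 3
    Y ^ 2 = X ^ 3 - 3 * a ^ 4 * c ^ 4 * X
      + a ^ 4 * c ^ 4 * (2 * a ^ 2 * c ^ 2 - 4 * a * b ^ 2 * c + b ^ 4) :=
  stmt_10_general a b c y z hy hC
end

section
/- Let a, b, c, X, Y be rational numbers with abc ≠ 0, a⁴c⁴ − 2a³b²c³ − 2X·a²c² + X² ≠ 0, and a⁴c⁴ + 4a³b²c³ − 2X·a²c² + X² ≠ 0, satisfying Y² = X³ − 3·a⁴c⁴·X + a⁴c⁴·(2a²c² − 4ab²c + b⁴). Define y = b·c·(−a³c³ + a²b²c² + X·a·c + Y)/(a⁴c⁴ − 2a³b²c³ − 2X·a²c² + X²) and z = 2·b·c·(−2a³c³ − a²b²c² + 2X·a·c + Y)/(a⁴c⁴ + 4a³b²c³ − 2X·a²c² + X²). Then a²·y²·z²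 − 2·a·c·y² − 2·a·c·y·z + a·c·z² − 2·b·c·y + b·c·z = 0. -/
/-!
Put `u = a * c`, `B = b ^ 2`, `x = X - u ^ 2`, and write `y = b * c * P`, `z = 2 * b * c * Q`.
On `E₂` the coordinate `x` can be recovered from `(P, Q)` in two ways:
`x * (P - Q) = 2 * u ^ 2 * B * P * Q - u` and `x * P * Q = u * (P + 2 * Q) + 1`.
Eliminating `x` between these two relations gives the equation of `C₂` in the coordinates `P`, `Q`.

Each relation is checked by clearing denominators. The numerators of `P` and `Q` are
`Y + (u * x + u ^ 2 * B)` and `Y + (2 * u * x - u ^ 2 * B)`; reduced modulo the equation of `E₂`,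
their product is linear in `Y`, so both relations become identities between linear polynomials
in `Y`.
-/

section ReducedCoordinates

variable {R : Type*} [CommRing R] {u B x Y P Q : R}

lemma denominators_mul_mul_eq
    (hE : Y ^ 2 = x ^ 2 * (x + 3 * u ^ 2) + u ^ 4 * B * (B - 4 * u))
    (hP : (x ^ 2 - 2 * u ^ 3 * B) * P = Y + (u * x + u ^ 2 * B))
    (hQ : (x ^ 2 + 4 * u ^ 3 * B) * Q = Y + (2 * u * x - u ^ 2 * B)) :
    (x ^ 2 - 2 * u ^ 3 * B) * (x ^ 2 + 4 * u ^ 3 * B) * (P * Q)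
      = 3 * u * x * Y + (x ^ 3 + 5 * u ^ 2 * x ^ 2 + u ^ 3 * B * x - 4 * u ^ 5 * B) := by
  calc
    _ = ((x ^ 2 - 2 * u ^ 3 * B) * P) * ((x ^ 2 + 4 * u ^ 3 * B) * Q) := by ring
    _ = (Y + (u * x + u ^ 2 * B)) * (Y + (2 * u * x - u ^ 2 * B)) := by rw [hP, hQ]
    _ = _ := by linear_combination hE

variable [NoZeroDivisors R]

lemma x_mul_sub_eq
    (hE : Y ^ 2 = x ^ 2 * (x + 3 * u ^ 2) + u ^ 4 * B * (B - 4 * u))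
    (hD₁ : x ^ 2 - 2 * u ^ 3 * B ≠ 0) (hD₂ : x ^ 2 + 4 * u ^ 3 * B ≠ 0)
    (hP : (x ^ 2 - 2 * u ^ 3 * B) * P = Y + (u * x + u ^ 2 * B))
    (hQ : (x ^ 2 + 4 * u ^ 3 * B) * Q = Y + (2 * u * x - u ^ 2 * B)) :
    x * (P - Q) = 2 * u ^ 2 * B * P * Q - u := by
  refine mul_left_cancel₀ (mul_ne_zero hD₁ hD₂) ?_
  linear_combination x * (x ^ 2 + 4 * u ^ 3 * B) * hP - x * (x ^ 2 - 2 * u ^ 3 * B) * hQ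
    - 2 * u ^ 2 * B * denominators_mul_mul_eq hE hP hQ

lemma x_mul_mul_eq
    (hE : Y ^ 2 = x ^ 2 * (x + 3 * u ^ 2) + u ^ 4 * B * (B - 4 * u))
    (hD₁ : x ^ 2 - 2 * u ^ 3 * B ≠ 0) (hD₂ : x ^ 2 + 4 * u ^ 3 * B ≠ 0)
    (hP : (x ^ 2 - 2 * u ^ 3 * B) * P = Y + (u * x + u ^ 2 * B))
    (hQ : (x ^ 2 + 4 * u ^ 3 * B) * Q = Y + (2 * u * x - u ^ 2 * B)) :
    x * P * Q = u * (P + 2 * Q) + 1 := by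
  refine mul_left_cancel₀ (mul_ne_zero hD₁ hD₂) ?_
  linear_combination x * denominators_mul_mul_eq hE hP hQ
    - u * (x ^ 2 + 4 * u ^ 3 * B) * hP - 2 * u * (x ^ 2 - 2 * u ^ 3 * B) * hQ

lemma reduced_quartic_eq
    (hE : Y ^ 2 = x ^ 2 * (x + 3 * u ^ 2) + u ^ 4 * B * (B - 4 * u))
    (hD₁ : x ^ 2 - 2 * u ^ 3 * B ≠ 0) (hD₂ : x ^ 2 + 4 * u ^ 3 * B ≠ 0)
    (hP : (x ^ 2 - 2 * u ^ 3 * B) * P = Y + (u * x + u ^ 2 * B))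
    (hQ : (x ^ 2 + 4 * u ^ 3 * B) * Q = Y + (2 * u * x - u ^ 2 * B)) :
    (2 * u ^ 2 * B * P * Q - u) * (P * Q) = (u * (P + 2 * Q) + 1) * (P - Q) := by
  rw [← x_mul_sub_eq hE hD₁ hD₂ hP hQ, ← x_mul_mul_eq hE hD₁ hD₂ hP hQ]
  ring

end ReducedCoordinates

theorem stmt_11_general {K : Type*} [Field K] (a b c X Y : K)
    (hd1 : a ^ 4 * c ^ 4 - 2 * a ^ 3 * b ^ 2 * c ^ 3 - 2 * X * a ^ 2 * c ^ 2
      + X ^ 2 ≠ 0)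
    (hd2 : a ^ 4 * c ^ 4 + 4 * a ^ 3 * b ^ 2 * c ^ 3 - 2 * X * a ^ 2 * c ^ 2
      + X ^ 2 ≠ 0)
    (hE : Y ^ 2 = X ^ 3 - 3 * a ^ 4 * c ^ 4 * X
      + a ^ 4 * c ^ 4 * (2 * a ^ 2 * c ^ 2 - 4 * a * b ^ 2 * c + b ^ 4)) :
    let y : K := b * c * (-(a ^ 3 * c ^ 3) + a ^ 2 * b ^ 2 * c ^ 2 + X * a * c + Y)
      / (a ^ 4 * c ^ 4 - 2 * a ^ 3 * b ^ 2 * c ^ 3 - 2 * X * a ^ 2 * c ^ 2 + X ^ 2)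
    let z : K := 2 * b * c * (-(2 * a ^ 3 * c ^ 3) - a ^ 2 * b ^ 2 * c ^ 2
      + 2 * X * a * c + Y)
      / (a ^ 4 * c ^ 4 + 4 * a ^ 3 * b ^ 2 * c ^ 3 - 2 * X * a ^ 2 * c ^ 2 + X ^ 2)
    a ^ 2 * y ^ 2 * z ^ 2 - 2 * a * c * y ^ 2 - 2 * a * c * y * z + a * c * z ^ 2
      - 2 * b * c * y + b * c * z = 0 := by
  intro y z
  obtain ⟨P, hP⟩ : ∃ P, P = (-(a ^ 3 * c ^ 3) + a ^ 2 * b ^ 2 * c ^ 2 + X * a * c + Y)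
      / (a ^ 4 * c ^ 4 - 2 * a ^ 3 * b ^ 2 * c ^ 3 - 2 * X * a ^ 2 * c ^ 2 + X ^ 2) := ⟨_, rfl⟩
  obtain ⟨Q, hQ⟩ : ∃ Q, Q = (-(2 * a ^ 3 * c ^ 3) - a ^ 2 * b ^ 2 * c ^ 2 + 2 * X * a * c + Y)
      / (a ^ 4 * c ^ 4 + 4 * a ^ 3 * b ^ 2 * c ^ 3 - 2 * X * a ^ 2 * c ^ 2 + X ^ 2) := ⟨_, rfl⟩
  have hy : y = b * c * P := by rw [hP, ← mul_div_assoc]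
  have hz : z = 2 * b * c * Q := by rw [hQ, ← mul_div_assoc]
  have hquartic := reduced_quartic_eq (u := a * c) (B := b ^ 2) (x := X - (a * c) ^ 2)
    (Y := Y) (P := P) (Q := Q) (by linear_combination hE)
    (by convert hd1 using 1; ring) (by convert hd2 using 1; ring)
    (by linear_combination (eq_div_iff hd1).mp hP) (by linear_combination (eq_div_iff hd2).mp hQ)
  rw [hy, hz]
  linear_combination 2 * (b * c) ^ 2 * hquartic

theorem stmt_11 (a b c X Y : ℚ) (habc : a * b * c ≠ 0)
    (hd1 : a ^ 4 * c ^ 4 - 2 * a ^ 3 * b ^ 2 * c ^ 3 - 2 * X * a ^ 2 * c ^ 2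
      + X ^ 2 ≠ 0)
    (hd2 : a ^ 4 * c ^ 4 + 4 * a ^ 3 * b ^ 2 * c ^ 3 - 2 * X * a ^ 2 * c ^ 2
      + X ^ 2 ≠ 0)
    (hE : Y ^ 2 = X ^ 3 - 3 * a ^ 4 * c ^ 4 * X
      + a ^ 4 * c ^ 4 * (2 * a ^ 2 * c ^ 2 - 4 * a * b ^ 2 * c + b ^ 4)) :
    let y : ℚ := b * c * (-(a ^ 3 * c ^ 3) + a ^ 2 * b ^ 2 * c ^ 2 + X * a * c + Y)
      / (a ^ 4 * c ^ 4 - 2 * a ^ 3 * b ^ 2 * c ^ 3 - 2 * X * a ^ 2 * c ^ 2 + X ^ 2)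
    let z : ℚ := 2 * b * c * (-(2 * a ^ 3 * c ^ 3) - a ^ 2 * b ^ 2 * c ^ 2
      + 2 * X * a * c + Y)
      / (a ^ 4 * c ^ 4 + 4 * a ^ 3 * b ^ 2 * c ^ 3 - 2 * X * a ^ 2 * c ^ 2 + X ^ 2)
    a ^ 2 * y ^ 2 * z ^ 2 - 2 * a * c * y ^ 2 - 2 * a * c * y * z + a * c * z ^ 2
      - 2 * b * c * y + b * c * z = 0 :=
  stmt_11_general a b c X Y hd1 hd2 hE
end

section
/- Let a, b, c be rational numbers with abc ≠ 0 and b² = 4ac, and let t be a rational number such that 68b²t² + 48bct² − 144c²t² + 4bct − 24c²t − c² ≠ 0 and 100b²t² − 192bct² + 144c²t² − 16bct + 24c²t + c² ≠ 0. Define y = 24ct·(2bt − 12ct − c)/(68b²t² + 48bct² − 144c²t² + 4bct − 24c²t − c²) and z = −48ct·(8bt − 12ct − c)/(100b²t² − 192bct² + 144c²t² − 16bct + 24c²t + c²). Then b³·y²·z² − 8·b·c²·y² − 8·b·c²·y·z + 4·b·c²·z² − 32·c³·y + 16·c³·z = 0. -/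
/-!
Up to scaling both coordinates by `c / b`, the curve is `(Y * Z - 4) ^ 2 + (2 * (Z + 2)) ^ 2 =
2 * (2 * (Y + 2)) ^ 2`, so it has a double point at `(-2, -2)` and maps to the conic
`u ^ 2 + v ^ 2 = 2 * w ^ 2`. The standard parametrization of this conic by `(p : q)` lifts to the
curve. The formulas of the theorem are this lift after the linear substitution `p = 6 * b * t`,
`q = c + 12 * c * t - 8 * b * t`.
-/

section CommRing

variable {R : Type*} [CommRing R]

/-- The polynomial whose zero locus is the degenerate curve in the normalized coordinates
`Y = b * y / c`, `Z = b * z / c`, in which it no longer depends on `b` and `c`. -/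
def nodalQuartic (Y Z : R) : R :=
  Y ^ 2 * Z ^ 2 - 8 * Y ^ 2 - 8 * Y * Z + 4 * Z ^ 2 - 32 * Y + 16 * Z

theorem nodalQuartic_eq_sq_add_sq_sub (Y Z : R) :
    nodalQuartic Y Z = (Y * Z - 4) ^ 2 + (2 * (Z + 2)) ^ 2 - 2 * (2 * (Y + 2)) ^ 2 := by
  unfold nodalQuartic
  ring

theorem mul_quartic_eq_pow_mul_nodalQuartic {b c y z Y Z : R} (hy : b * y = c * Y)
    (hz : b * z = c * Z) :
    b * (b ^ 3 * y ^ 2 * z ^ 2 - 8 * b * c ^ 2 * y ^ 2 - 8 * b * c ^ 2 * y * z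
      + 4 * b * c ^ 2 * z ^ 2 - 32 * c ^ 3 * y + 16 * c ^ 3 * z) = c ^ 4 * nodalQuartic Y Z :=
  calc
    _ = (b * y) ^ 2 * (b * z) ^ 2 - 8 * c ^ 2 * (b * y) ^ 2 - 8 * c ^ 2 * (b * y) * (b * z)
        + 4 * c ^ 2 * (b * z) ^ 2 - 32 * c ^ 3 * (b * y) + 16 * c ^ 3 * (b * z) := by ring
    _ = c ^ 4 * nodalQuartic Y Z := by
      rw [hy, hz, nodalQuartic]
      ring

theorem sq_add_sq_eq_two_mul_sq_param (p q : R) :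
    (p ^ 2 + 2 * p * q - q ^ 2) ^ 2 + (p ^ 2 - 2 * p * q - q ^ 2) ^ 2
      = 2 * (p ^ 2 + q ^ 2) ^ 2 := by
  ring

end CommRing

section Field

variable {K : Type*} [Field K]

/-- The first coordinate of the parametrization of `nodalQuartic` by `(p : q)`, meaningful where
`p ^ 2 - 2 * p * q - q ^ 2 ≠ 0`. -/
def nodalQuarticParamY (p q : K) : K :=
  -(4 * p * (p + q)) / (p ^ 2 - 2 * p * q - q ^ 2)

/-- The second coordinate of the parametrization of `nodalQuartic` by `(p : q)`, meaningful where
`p ^ 2 + q ^ 2 ≠ 0`. -/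
def nodalQuarticParamZ (p q : K) : K :=
  8 * p * q / (p ^ 2 + q ^ 2)

theorem nodalQuarticParamY_add_two {p q : K} (hD : p ^ 2 - 2 * p * q - q ^ 2 ≠ 0) :
    nodalQuarticParamY p q + 2
      = -(2 * (p ^ 2 + 4 * p * q + q ^ 2)) / (p ^ 2 - 2 * p * q - q ^ 2) := by
  rw [nodalQuarticParamY, div_add' _ _ _ hD]
  ring

theorem nodalQuarticParamZ_add_two {p q : K} (hE : p ^ 2 + q ^ 2 ≠ 0) :
    nodalQuarticParamZ p q + 2 = 2 * (p ^ 2 + 4 * p * q + q ^ 2) / (p ^ 2 + q ^ 2) := by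
  rw [nodalQuarticParamZ, div_add' _ _ _ hE]
  ring

theorem nodalQuarticParamY_mul_nodalQuarticParamZ_sub_four {p q : K}
    (hD : p ^ 2 - 2 * p * q - q ^ 2 ≠ 0) (hE : p ^ 2 + q ^ 2 ≠ 0) :
    nodalQuarticParamY p q * nodalQuarticParamZ p q - 4
      = -(4 * (p ^ 2 + 4 * p * q + q ^ 2) * (p ^ 2 + 2 * p * q - q ^ 2))
        / ((p ^ 2 - 2 * p * q - q ^ 2) * (p ^ 2 + q ^ 2)) := by
  rw [nodalQuarticParamY, nodalQuarticParamZ, div_mul_div_comm, div_sub' (mul_ne_zero hD hE)]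
  ring

theorem nodalQuartic_param_eq_zero {p q : K} (hD : p ^ 2 - 2 * p * q - q ^ 2 ≠ 0)
    (hE : p ^ 2 + q ^ 2 ≠ 0) :
    nodalQuartic (nodalQuarticParamY p q) (nodalQuarticParamZ p q) = 0 := by
  have hconic := sq_add_sq_eq_two_mul_sq_param p q
  rw [nodalQuartic_eq_sq_add_sq_sub, nodalQuarticParamY_mul_nodalQuarticParamZ_sub_four hD hE,
    nodalQuarticParamY_add_two hD, nodalQuarticParamZ_add_two hE]
  -- The point maps to `(u, v, w) = (-N, D, -E)`, up to the factor `4 * S / (D * E)`.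
  generalize p ^ 2 + 4 * p * q + q ^ 2 = S
  generalize p ^ 2 + 2 * p * q - q ^ 2 = N at *
  generalize p ^ 2 - 2 * p * q - q ^ 2 = D at *
  generalize p ^ 2 + q ^ 2 = E at *
  calc
    _ = (4 * S / (D * E)) ^ 2 * (N ^ 2 + D ^ 2 - 2 * E ^ 2) := by
      field_simp
      ring
    _ = 0 := by rw [hconic, sub_self, mul_zero]

theorem stmt_12_general {b c t : K} (hb : b ≠ 0)
    (h1 : 68 * b ^ 2 * t ^ 2 + 48 * b * c * t ^ 2 - 144 * c ^ 2 * t ^ 2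
      + 4 * b * c * t - 24 * c ^ 2 * t - c ^ 2 ≠ 0)
    (h2 : 100 * b ^ 2 * t ^ 2 - 192 * b * c * t ^ 2 + 144 * c ^ 2 * t ^ 2
      - 16 * b * c * t + 24 * c ^ 2 * t + c ^ 2 ≠ 0) :
    let y : K := 24 * c * t * (2 * b * t - 12 * c * t - c)
      / (68 * b ^ 2 * t ^ 2 + 48 * b * c * t ^ 2 - 144 * c ^ 2 * t ^ 2
        + 4 * b * c * t - 24 * c ^ 2 * t - c ^ 2)
    let z : K := -(48 * c * t * (8 * b * t - 12 * c * t - c))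
      / (100 * b ^ 2 * t ^ 2 - 192 * b * c * t ^ 2 + 144 * c ^ 2 * t ^ 2
        - 16 * b * c * t + 24 * c ^ 2 * t + c ^ 2)
    b ^ 3 * y ^ 2 * z ^ 2 - 8 * b * c ^ 2 * y ^ 2 - 8 * b * c ^ 2 * y * z
      + 4 * b * c ^ 2 * z ^ 2 - 32 * c ^ 3 * y + 16 * c ^ 3 * z = 0 := by
  intro y z
  let p := 6 * b * t
  let q := c + 12 * c * t - 8 * b * t
  have hD : p ^ 2 - 2 * p * q - q ^ 2 ≠ 0 := by
    convert h1 using 1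
    ring
  have hE : p ^ 2 + q ^ 2 ≠ 0 := by
    convert h2 using 1
    ring
  have hy : b * y = c * nodalQuarticParamY p q := by
    simp only [y, p, q, nodalQuarticParamY]
    ring
  have hz : b * z = c * nodalQuarticParamZ p q := by
    simp only [z, p, q, nodalQuarticParamZ]
    ring
  apply (mul_eq_zero_iff_left hb).mp
  rw [mul_quartic_eq_pow_mul_nodalQuartic hy hz, nodalQuartic_param_eq_zero hD hE, mul_zero]

end Field

theorem stmt_12 (a b c t : ℚ) (habc : a * b * c ≠ 0) (hb : b ^ 2 = 4 * a * c)
    (h1 : 68 * b ^ 2 * t ^ 2 + 48 * b * c * t ^ 2 - 144 * c ^ 2 * t ^ 2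
      + 4 * b * c * t - 24 * c ^ 2 * t - c ^ 2 ≠ 0)
    (h2 : 100 * b ^ 2 * t ^ 2 - 192 * b * c * t ^ 2 + 144 * c ^ 2 * t ^ 2
      - 16 * b * c * t + 24 * c ^ 2 * t + c ^ 2 ≠ 0) :
    let y : ℚ := 24 * c * t * (2 * b * t - 12 * c * t - c)
      / (68 * b ^ 2 * t ^ 2 + 48 * b * c * t ^ 2 - 144 * c ^ 2 * t ^ 2
        + 4 * b * c * t - 24 * c ^ 2 * t - c ^ 2)
    let z : ℚ := -(48 * c * t * (8 * b * t - 12 * c * t - c))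
      / (100 * b ^ 2 * t ^ 2 - 192 * b * c * t ^ 2 + 144 * c ^ 2 * t ^ 2
        - 16 * b * c * t + 24 * c ^ 2 * t + c ^ 2)
    b ^ 3 * y ^ 2 * z ^ 2 - 8 * b * c ^ 2 * y ^ 2 - 8 * b * c ^ 2 * y * z
      + 4 * b * c ^ 2 * z ^ 2 - 32 * c ^ 3 * y + 16 * c ^ 3 * z = 0 :=
  stmt_12_general (right_ne_zero_of_mul (left_ne_zero_of_mul habc)) h1 h2
end

section
/- Let a, b, c, y, z be rational numbers with abc ≠ 0, y ≠ 0, z ≠ 0, 2y − z ≠ 0, and y·z ≠ 0, and set f(t) = a·t + b + c/t and x = y·z/(2y − z) with x ≠ 0 (so that (x + y)·z = 2·x·y). Then (f(x) + f(y))·f(z) = 2·f(x)·f(y) if and only if (y − z)²·(a·b·y²·z² + 3·a·c·y²·z − 2·c²·y + c²·z) = 0. -/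
/-!
For `f t = a t + b + c / t`, write
`(f x + f y) f z - 2 f x f y = f x (f z - f y) + f y (f z - f x)`. Differences of values of `f` are
divisible by differences of arguments, and `x (y - z) = y (z - x)` by the harmonic-mean relation, so
the whole is a multiple of `y - z`. The cofactor is antisymmetric in `x` and `y`, hence a multiple
of `x - y`, and `z (x - y) = -2 x (y - z)` by the same relation. This accounts for the square; what
remains is `a b x y z + 3 a c x y - c ^ 2`, symmetric in `x` and `y`.
-/

section CommRing

variable {R : Type*} [CommRing R] {x y z : R}

/-- `z` is the harmonic mean of `x` and `y`. The defining relation is cross-multiplied, so that it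
also makes sense when some of the three numbers vanish. -/
def IsHarmonicMean (x y z : R) : Prop :=
  (x + y) * z = 2 * x * y

/-- The amount by which `z` fails to be the harmonic mean of `x` and `y`, in cross-multiplied
form. -/
def harmonicDefect (x y z : R) : R :=
  (x + y) * z - 2 * x * y

/-- The factor left in the harmonic defect of `f x`, `f y`, `f z`, for `f t = a t + b + c / t`,
after removing `(y - z) ^ 2`, when `z` is the harmonic mean of `x` and `y`. -/
def laurentResidual (a b c x y z : R) : R :=
  a * b * x * y * z + 3 * a * c * x * y - c ^ 2

theorem harmonicDefect_eq_zero_iff : harmonicDefect x y z = 0 ↔ IsHarmonicMean x y z :=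
  sub_eq_zero

namespace IsHarmonicMean

theorem mul_sub_eq_mul_sub (h : IsHarmonicMean x y z) : x * (y - z) = y * (z - x) := by
  unfold IsHarmonicMean at h
  linear_combination -h

theorem mul_sub_eq_neg_two_mul (h : IsHarmonicMean x y z) : z * (x - y) = -2 * x * (y - z) := by
  unfold IsHarmonicMean at h
  linear_combination -h

theorem two_mul_sub_mul_laurentResidual (h : IsHarmonicMean x y z) (a b c : R) :
    (2 * y - z) * laurentResidual a b c x y z =
      a * b * y ^ 2 * z ^ 2 + 3 * a * c * y ^ 2 * z - 2 * c ^ 2 * y + c ^ 2 * z := by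
  unfold IsHarmonicMean at h
  unfold laurentResidual
  linear_combination -(a * b * y * z + 3 * a * c * y) * h

end IsHarmonicMean

end CommRing

section Field

variable {K : Type*} [Field K] {a b c x y z : K}

/-- The value at `t` of the Laurent polynomial `a t + b + c t⁻¹`; at `t = 0` it has the junk
value `b`. -/
def laurentTrinomial (a b c t : K) : K :=
  a * t + b + c / t

theorem isHarmonicMean_iff_eq_div (hyz : 2 * y - z ≠ 0) :
    IsHarmonicMean x y z ↔ x = y * z / (2 * y - z) := by
  rw [IsHarmonicMean, eq_div_iff hyz]
  constructor <;> intro h <;> linear_combination -h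

theorem mul_laurentTrinomial_sub (a b c : K) (hx : x ≠ 0) (hy : y ≠ 0) :
    x * y * (laurentTrinomial a b c x - laurentTrinomial a b c y) =
      (x - y) * (a * x * y - c) := by
  unfold laurentTrinomial
  field_simp
  ring

theorem mul_cross_laurentTrinomial_sub (a b c : K) (hx : x ≠ 0) (hy : y ≠ 0) :
    x * y * (x * laurentTrinomial a b c y - y * laurentTrinomial a b c x) =
      (x - y) * (b * x * y + c * (x + y)) := by
  unfold laurentTrinomial
  field_simp
  ring

namespace IsHarmonicMean

theorem mul_harmonicDefect_laurentTrinomial (h : IsHarmonicMean x y z) (a b c : K)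
    (hx : x ≠ 0) (hy : y ≠ 0) (hz : z ≠ 0) :
    let f := laurentTrinomial a b c
    y * z * harmonicDefect (f x) (f y) (f z) =
      (y - z) * (f y * (a * x * z - c) - f x * (a * y * z - c)) := by
  intro f
  have hzy : z * y * (f z - f y) = (z - y) * (a * z * y - c) :=
    mul_laurentTrinomial_sub a b c hz hy
  have hzx : z * x * (f z - f x) = (z - x) * (a * z * x - c) :=
    mul_laurentTrinomial_sub a b c hz hx
  have hdefect : harmonicDefect (f x) (f y) (f z) = f x * (f z - f y) + f y * (f z - f x) := by
    unfold harmonicDefect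
    ring
  rw [hdefect]
  apply mul_left_cancel₀ hx
  linear_combination x * f x * hzy + y * f y * hzx - f y * (a * z * x - c) * h.mul_sub_eq_mul_sub

theorem mul_laurentTrinomial_cross_sub (h : IsHarmonicMean x y z) (a b c : K)
    (hx : x ≠ 0) (hy : y ≠ 0) :
    let f := laurentTrinomial a b c
    x * y * (f y * (a * x * z - c) - f x * (a * y * z - c)) =
      (x - y) * laurentResidual a b c x y z := by
  intro f
  have hcross : x * y * (x * f y - y * f x) = (x - y) * (b * x * y + c * (x + y)) :=
    mul_cross_laurentTrinomial_sub a b c hx hy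
  have hsub : x * y * (f x - f y) = (x - y) * (a * x * y - c) :=
    mul_laurentTrinomial_sub a b c hx hy
  unfold IsHarmonicMean at h
  unfold laurentResidual
  linear_combination a * z * hcross + c * hsub + (x - y) * a * c * h

theorem sq_mul_harmonicDefect_laurentTrinomial (h : IsHarmonicMean x y z) (a b c : K)
    (hx : x ≠ 0) (hy : y ≠ 0) (hz : z ≠ 0) :
    let f := laurentTrinomial a b c
    (y * z) ^ 2 * harmonicDefect (f x) (f y) (f z) =
      -2 * ((y - z) ^ 2 * laurentResidual a b c x y z) := by
  intro f
  set D := harmonicDefect (f x) (f y) (f z)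
  set S := laurentResidual a b c x y z
  set B := f y * (a * x * z - c) - f x * (a * y * z - c)
  have hD : y * z * D = (y - z) * B := h.mul_harmonicDefect_laurentTrinomial a b c hx hy hz
  have hB : x * y * B = (x - y) * S := h.mul_laurentTrinomial_cross_sub a b c hx hy
  apply mul_left_cancel₀ hx
  calc x * ((y * z) ^ 2 * D)
      = x * y * z * (y * z * D) := by ring
    _ = z * (y - z) * (x * y * B) := by rw [hD]; ring
    _ = (y - z) * (z * (x - y)) * S := by rw [hB]; ring
    _ = x * (-2 * ((y - z) ^ 2 * S)) := by rw [h.mul_sub_eq_neg_two_mul]; ring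

theorem laurentTrinomial_iff [NeZero (2 : K)] (h : IsHarmonicMean x y z)
    (hx : x ≠ 0) (hy : y ≠ 0) (hz : z ≠ 0) :
    IsHarmonicMean (laurentTrinomial a b c x) (laurentTrinomial a b c y)
        (laurentTrinomial a b c z) ↔
      (y - z) ^ 2 * laurentResidual a b c x y z = 0 := by
  have hyz : (y * z) ^ 2 ≠ 0 := pow_ne_zero 2 (mul_ne_zero hy hz)
  have h2 : (-2 : K) ≠ 0 := neg_ne_zero.mpr two_ne_zero
  rw [← harmonicDefect_eq_zero_iff, ← mul_eq_zero_iff_left hyz,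
    h.sq_mul_harmonicDefect_laurentTrinomial a b c hx hy hz, mul_eq_zero_iff_left h2]

end IsHarmonicMean

end Field

theorem stmt_14_general {K : Type*} [Field K] [NeZero (2 : K)] (a b c : K) {y z : K}
    (hy : y ≠ 0) (hz : z ≠ 0) (hyz : 2 * y - z ≠ 0) :
    let f : K → K := fun t => a * t + b + c / t
    let x : K := y * z / (2 * y - z)
    ((f x + f y) * f z = 2 * f x * f y ↔
      (y - z) ^ 2 * (a * b * y ^ 2 * z ^ 2 + 3 * a * c * y ^ 2 * z - 2 * c ^ 2 * y
        + c ^ 2 * z) = 0) := by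
  intro f x
  have hx : x ≠ 0 := div_ne_zero (mul_ne_zero hy hz) hyz
  have h : IsHarmonicMean x y z := (isHarmonicMean_iff_eq_div hyz).mpr rfl
  rw [← h.two_mul_sub_mul_laurentResidual a b c, mul_left_comm, mul_eq_zero_iff_left hyz]
  exact h.laurentTrinomial_iff hx hy hz

theorem stmt_14 (a b c y z : ℚ) (habc : a * b * c ≠ 0) (hy : y ≠ 0) (hz : z ≠ 0)
    (hyz : 2 * y - z ≠ 0) (hyz' : y * z ≠ 0)
    (hx : y * z / (2 * y - z) ≠ 0) :
    let f : ℚ → ℚ := fun t => a * t + b + c / t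
    let x : ℚ := y * z / (2 * y - z)
    ((f x + f y) * f z = 2 * f x * f y ↔
      (y - z) ^ 2 * (a * b * y ^ 2 * z ^ 2 + 3 * a * c * y ^ 2 * z - 2 * c ^ 2 * y
        + c ^ 2 * z) = 0) :=
  stmt_14_general a b c hy hz hyz
end

section
/- Let a, b, c, y, z be rational numbers with abc ≠ 0 and y ≠ 0 satisfying a·b·y²·z² + 3·a·c·y²·z − 2·c²·y + c²·z = 0. Define X = c²·(a·b·y²·z + 2·a·c·y² + c²)/y² and Y = c⁴·(a·b·y³ + a·b·y²·z + 3·a·c·y² + c²)/y³. Then Y² = X³ − 3·a²c⁶·X − a²c⁸·(2ac − b²). -/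
/-!
Put `p = a c³` and `q = a b c⁴`. Since `x³ - 3p²x - 2p³ = (x - 2p)(x + p)²`, the curve `E₃` is
`Y² - q² = (X - 2p)(X + p)²`, so it passes through `(-p, q)`. On the line of slope `t` through this
point, `(X, Y) = (u - p, q + t u)`, the equation becomes `u = 0` or `u (u - 3p - t²) = 2qt`.
For `t = c²/y` and `u = a b c² z + 3p + t²` the latter equation is `a b c²` times `u z = 2c²t`,
which is the equation of `C₃`.
-/

section CommRing

variable {R : Type*} [CommRing R]

theorem sub_two_mul_mul_add_sq (p x : R) :
    (x - 2 * p) * (x + p) ^ 2 = x ^ 3 - 3 * p ^ 2 * x - 2 * p ^ 3 := by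
  ring

theorem sq_eq_cubic_of_mem_line {p q t u : R} (h : u * (u - 3 * p - t ^ 2) = 2 * q * t) :
    (q + t * u) ^ 2 = (u - p) ^ 3 - 3 * p ^ 2 * (u - p) - 2 * p ^ 3 + q ^ 2 :=
  calc (q + t * u) ^ 2 = u * (2 * q * t + t ^ 2 * u) + q ^ 2 := by ring
    _ = u * (u * (u - 3 * p - t ^ 2) + t ^ 2 * u) + q ^ 2 := by rw [h]
    _ = (u - p - 2 * p) * (u - p + p) ^ 2 + q ^ 2 := by ring
    _ = (u - p) ^ 3 - 3 * p ^ 2 * (u - p) - 2 * p ^ 3 + q ^ 2 := by rw [sub_two_mul_mul_add_sq]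

end CommRing

section Field

variable {K : Type*} [Field K]

theorem mul_eq_two_mul_slope_of_mem_curve {a b c y z : K} (hy : y ≠ 0)
    (hC : a * b * y ^ 2 * z ^ 2 + 3 * a * c * y ^ 2 * z - 2 * c ^ 2 * y + c ^ 2 * z = 0) :
    (a * b * c ^ 2 * z + 3 * (a * c ^ 3) + (c ^ 2 / y) ^ 2) * z = 2 * c ^ 2 * (c ^ 2 / y) := by
  field_simp
  linear_combination c ^ 2 * hC

theorem stmt_15_general (a b c y z : K) (hy : y ≠ 0)
    (hC : a * b * y ^ 2 * z ^ 2 + 3 * a * c * y ^ 2 * z - 2 * c ^ 2 * y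
      + c ^ 2 * z = 0) :
    let X : K := c ^ 2 * (a * b * y ^ 2 * z + 2 * a * c * y ^ 2 + c ^ 2) / y ^ 2
    let Y : K := c ^ 4 * (a * b * y ^ 3 + a * b * y ^ 2 * z + 3 * a * c * y ^ 2
      + c ^ 2) / y ^ 3
    Y ^ 2 = X ^ 3 - 3 * a ^ 2 * c ^ 6 * X
      - a ^ 2 * c ^ 8 * (2 * a * c - b ^ 2) := by
  intro X Y
  let t := c ^ 2 / y
  let u := a * b * c ^ 2 * z + 3 * (a * c ^ 3) + t ^ 2
  have hX : X = u - a * c ^ 3 := by simp only [X, u, t]; field_simp; ring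
  have hY : Y = a * b * c ^ 4 + t * u := by simp only [Y, u, t]; field_simp; ring
  have huz : u * z = 2 * c ^ 2 * t := mul_eq_two_mul_slope_of_mem_curve hy hC
  have hline : u * (u - 3 * (a * c ^ 3) - t ^ 2) = 2 * (a * b * c ^ 4) * t :=
    calc u * (u - 3 * (a * c ^ 3) - t ^ 2) = a * b * c ^ 2 * (u * z) := by ring
      _ = 2 * (a * b * c ^ 4) * t := by rw [huz]; ring
  rw [hX, hY, sq_eq_cubic_of_mem_line hline]
  ring

end Field

theorem stmt_15 (a b c y z : ℚ) (habc : a * b * c ≠ 0) (hy : y ≠ 0)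
    (hC : a * b * y ^ 2 * z ^ 2 + 3 * a * c * y ^ 2 * z - 2 * c ^ 2 * y
      + c ^ 2 * z = 0) :
    let X : ℚ := c ^ 2 * (a * b * y ^ 2 * z + 2 * a * c * y ^ 2 + c ^ 2) / y ^ 2
    let Y : ℚ := c ^ 4 * (a * b * y ^ 3 + a * b * y ^ 2 * z + 3 * a * c * y ^ 2
      + c ^ 2) / y ^ 3
    Y ^ 2 = X ^ 3 - 3 * a ^ 2 * c ^ 6 * X
      - a ^ 2 * c ^ 8 * (2 * a * c - b ^ 2) :=
  stmt_15_general a b c y z hy hC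
end

section
/- Let a, b, c, X, Y be rational numbers with abc ≠ 0, X ≠ −ac³, and X ≠ 2ac³, satisfying Y² = X³ − 3·a²c⁶·X − a²c⁸·(2ac − b²). Define y = c²·(Y + abc⁴)/((X + ac³)·(X − 2ac³)) and z = 2·c²·(Y − abc⁴)/(X + ac³)². Then a·b·y²·z² + 3·a·c·y²·z − 2·c²·y + c²·z = 0. -/
/-!
Put `P = X + ac³`, `Q = X - 2ac³ = P - 3ac³` and `k = abc⁴`. The equation of the elliptic curve
factors as `(Y + k)(Y - k) = P²Q`, whence `yz = 2c⁴/P`. Substituting this into the quartic leaves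
`4c⁴k/P² - (2c²/P)Qy + c²z`, which is linear in `y` and `z`; as `Qy = c²(Y + k)/P`, it equals
`(4c⁴k - 2c⁴(Y + k) + 2c⁴(Y - k))/P² = 0`.
-/

theorem sq_eq_cubic_iff_mul_eq_sq_mul {R : Type*} [CommRing R] (a b c X Y : R) :
    Y ^ 2 = X ^ 3 - 3 * a ^ 2 * c ^ 6 * X - a ^ 2 * c ^ 8 * (2 * a * c - b ^ 2) ↔
      (Y + a * b * c ^ 4) * (Y - a * b * c ^ 4)
        = (X + a * c ^ 3) ^ 2 * (X - 2 * a * c ^ 3) := by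
  constructor <;> intro h <;> linear_combination h

section Field

variable {K : Type*} [Field K]

theorem div_mul_div_eq_div_of_mul_eq_sq_mul {P Q s t : K} (d e : K) (hP : P ≠ 0) (hQ : Q ≠ 0)
    (hst : s * t = P ^ 2 * Q) :
    d * s / (P * Q) * (e * t / P ^ 2) = d * e / P := by
  calc d * s / (P * Q) * (e * t / P ^ 2)
      = d * e * (s * t) / (P ^ 3 * Q) := by field_simp
    _ = d * e * (P ^ 2 * Q) / (P ^ 3 * Q) := by rw [hst]
    _ = d * e / P := by field_simp

theorem quartic_eq_linear_of_mul_eq_div {P y z : K} (a b c : K) (hP : P ≠ 0)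
    (hyz : y * z = 2 * c ^ 4 / P) :
    a * b * y ^ 2 * z ^ 2 + 3 * a * c * y ^ 2 * z - 2 * c ^ 2 * y + c ^ 2 * z
      = 4 * a * b * c ^ 8 / P ^ 2 - 2 * c ^ 2 / P * ((P - 3 * a * c ^ 3) * y) + c ^ 2 * z := by
  calc a * b * y ^ 2 * z ^ 2 + 3 * a * c * y ^ 2 * z - 2 * c ^ 2 * y + c ^ 2 * z
      = a * b * (y * z) ^ 2 + 3 * a * c * (y * z) * y - 2 * c ^ 2 * y + c ^ 2 * z := by ring
    _ = 4 * a * b * c ^ 8 / P ^ 2 - 2 * c ^ 2 / P * ((P - 3 * a * c ^ 3) * y) + c ^ 2 * z := by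
      rw [hyz]
      field_simp
      ring

theorem stmt_16_general (a b c X Y : K)
    (hX1 : X ≠ -(a * c ^ 3)) (hX2 : X ≠ 2 * a * c ^ 3)
    (hE : Y ^ 2 = X ^ 3 - 3 * a ^ 2 * c ^ 6 * X
      - a ^ 2 * c ^ 8 * (2 * a * c - b ^ 2)) :
    let y : K := c ^ 2 * (Y + a * b * c ^ 4)
      / ((X + a * c ^ 3) * (X - 2 * a * c ^ 3))
    let z : K := 2 * c ^ 2 * (Y - a * b * c ^ 4) / (X + a * c ^ 3) ^ 2
    a * b * y ^ 2 * z ^ 2 + 3 * a * c * y ^ 2 * z - 2 * c ^ 2 * y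
      + c ^ 2 * z = 0 := by
  intro y z
  have hP : X + a * c ^ 3 ≠ 0 := fun h => hX1 (eq_neg_of_add_eq_zero_left h)
  have hQ : X - 2 * a * c ^ 3 ≠ 0 := sub_ne_zero.mpr hX2
  have hyz : y * z = 2 * c ^ 4 / (X + a * c ^ 3) :=
    (div_mul_div_eq_div_of_mul_eq_sq_mul (c ^ 2) (2 * c ^ 2) hP hQ
      ((sq_eq_cubic_iff_mul_eq_sq_mul a b c X Y).mp hE)).trans (by ring)
  have hQy : (X - 2 * a * c ^ 3) * y = c ^ 2 * (Y + a * b * c ^ 4) / (X + a * c ^ 3) := by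
    rw [← mul_div_assoc, mul_comm (X + a * c ^ 3), mul_div_mul_left _ _ hQ]
  have hQP : X + a * c ^ 3 - 3 * a * c ^ 3 = X - 2 * a * c ^ 3 := by ring
  rw [quartic_eq_linear_of_mul_eq_div a b c hP hyz, hQP, hQy]
  simp only [z]
  field_simp
  ring

end Field

theorem stmt_16 (a b c X Y : ℚ) (habc : a * b * c ≠ 0)
    (hX1 : X ≠ -(a * c ^ 3)) (hX2 : X ≠ 2 * a * c ^ 3)
    (hE : Y ^ 2 = X ^ 3 - 3 * a ^ 2 * c ^ 6 * X
      - a ^ 2 * c ^ 8 * (2 * a * c - b ^ 2)) :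
    let y : ℚ := c ^ 2 * (Y + a * b * c ^ 4)
      / ((X + a * c ^ 3) * (X - 2 * a * c ^ 3))
    let z : ℚ := 2 * c ^ 2 * (Y - a * b * c ^ 4) / (X + a * c ^ 3) ^ 2
    a * b * y ^ 2 * z ^ 2 + 3 * a * c * y ^ 2 * z - 2 * c ^ 2 * y
      + c ^ 2 * z = 0 :=
  stmt_16_general a b c X Y hX1 hX2 hE
end
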